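/- Let X and Y be trees, p ∈ R(X) (a ramification point of X) and q ∈ Y. If h : C(p,X) → C(q,Y) is a homeomorphism, then there exists a homeomorphism 𝔥 : X → Y with 𝔥(p) = q. -/

import Mathlib

open Set Topology TopologicalSpace

universe u

/-- `IndDimLE m α t` means that the small inductive dimension of `α` is at most `m - 1`.
In particular `IndDimLE 0 α t` means `α` is empty (dimension `-1`). -/
def IndDimLE : ℕ → (α : Type u) → TopologicalSpace α → Prop
  | 0, α, _ => IsEmpty α
  | n + 1, α, t =>
      ∀ (x : α) (U : Set α), @IsOpen α t U → x ∈ U →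
        ∃ V : Set α, @IsOpen α t V ∧ x ∈ V ∧ V ⊆ U ∧
          IndDimLE n (↥(@frontier α t V))
            (TopologicalSpace.induced (Subtype.val : ↥(@frontier α t V) → α) t)

/-- The small inductive dimension of a topological space, as an integer
(with junk value if the dimension is infinite). -/
noncomputable def indDim (α : Type u) [t : TopologicalSpace α] : ℤ :=
  sInf {d : ℤ | ∃ m : ℕ, d = (m : ℤ) - 1 ∧ IndDimLE m α t}

section Defs

variable {X : Type u} [TopologicalSpace X]

/-- `A` is an arc, i.e. homeomorphic to `[0,1]`. -/
def IsArcSet (A : Set X) : Prop :=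
  Nonempty (↥A ≃ₜ ↥(Icc (0 : ℝ) 1))

/-- `A` is an arc with end points `a` and `b`. -/
def IsArcFromTo (A : Set X) (a b : X) : Prop :=
  ∃ h : ↥(Icc (0 : ℝ) 1) ≃ₜ ↥A,
    ((h ⟨0, by norm_num⟩ : ↥A) : X) = a ∧ ((h ⟨1, by norm_num⟩ : ↥A) : X) = b

/-- `a` is an end point of the arc `A`. -/
def IsArcEndpoint (A : Set X) (a : X) : Prop := ∃ b, IsArcFromTo A a b

/-- The points of the arc `A` which are not end points of `A`. -/
def arcInterior (A : Set X) : Set X := {x ∈ A | ¬ IsArcEndpoint A x}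

/-- `N` is a simple `n`-od with vertex `v`: the union of `n` arcs emanating from `v`
and otherwise disjoint from each other. -/
def IsSimpleNod (n : ℕ) (N : Set X) (v : X) : Prop :=
  0 < n ∧ ∃ A : Fin n → Set X, (∀ i, IsArcSet (A i)) ∧ (⋃ i, A i) = N ∧
    (∀ i, IsArcEndpoint (A i) v) ∧ ∀ i j, i ≠ j → A i ∩ A j = {v}

/-- `x` has order `n` in the subspace `S`: `x` has a closed neighborhood in `S`
which is a simple `n`-od having `x` as the vertex. -/
def HasOrdIn (S : Set X) (x : X) (n : ℕ) : Prop :=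
  ∃ N : Set X, N ⊆ S ∧ IsClosed N ∧ (∃ U : Set X, IsOpen U ∧ x ∈ U ∧ U ∩ S ⊆ N) ∧
    IsSimpleNod n N x

/-- The order of `x` in the subspace `S`. -/
noncomputable def ordIn (S : Set X) (x : X) : ℕ := sInf {n | HasOrdIn S x n}

/-- End points (order `1`) of the subspace `S`. -/
def endPtsIn (S : Set X) : Set X := {x ∈ S | HasOrdIn S x 1}

/-- Ordinary points (order `2`) of the subspace `S`. -/
def ordinaryIn (S : Set X) : Set X := {x ∈ S | HasOrdIn S x 2}

/-- Ramification points (order `≥ 3`) of the subspace `S`. -/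
def ramifIn (S : Set X) : Set X := {x ∈ S | ∃ n, 3 ≤ n ∧ HasOrdIn S x n}

/-- Vertices (points of order `≠ 2`) of the subspace `S`. -/
def verticesIn (S : Set X) : Set X := {x ∈ S | ¬ HasOrdIn S x 2}

/-- `e` is an edge of the subspace `S`: an arc joining two vertices of `S` and
containing no more than two vertices of `S`. -/
def IsEdgeIn (S : Set X) (e : Set X) : Prop :=
  e ⊆ S ∧ ∃ a b, a ∈ verticesIn S ∧ b ∈ verticesIn S ∧ IsArcFromTo e a b ∧
    e ∩ verticesIn S ⊆ {a, b}

/-- `S` is a simple closed curve. -/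
def IsSimpleClosedCurve (S : Set X) : Prop := Nonempty (↥S ≃ₜ Circle)

end Defs

/-- `X` is an arc (as a space). -/
def IsArcSpace (X : Type u) [TopologicalSpace X] : Prop :=
  Nonempty (X ≃ₜ ↥(Icc (0 : ℝ) 1))

/-- `X` is a finite graph: a continuum which is the union of finitely many arcs, any two
of which are either disjoint or intersect only in one or both of their end points. -/
def IsFiniteGraph (X : Type u) [MetricSpace X] : Prop :=
  CompactSpace X ∧ ConnectedSpace X ∧ Nonempty X ∧
    ∃ 𝒜 : Finset (Set X), (∀ A ∈ 𝒜, IsArcSet A) ∧ ⋃₀ (𝒜 : Set (Set X)) = univ ∧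
      ∀ A ∈ 𝒜, ∀ B ∈ 𝒜, A ≠ B → ∀ x ∈ A ∩ B, IsArcEndpoint A x ∧ IsArcEndpoint B x

/-- `X` is a tree: a finite graph without simple closed curves. -/
def IsTree (X : Type u) [MetricSpace X] : Prop :=
  IsFiniteGraph X ∧ ∀ S : Set X, ¬ IsSimpleClosedCurve S

/-- `X` is neither an arc nor a simple `n`-od. -/
def NotArcNotNod (X : Type u) [MetricSpace X] : Prop :=
  ¬ IsArcSpace X ∧ ∀ (n : ℕ) (v : X), ¬ IsSimpleNod n (univ : Set X) v

/-- `T(X)`: the union of all edges of `X` disjoint from the set of end points of `X`. -/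
def Tpart (X : Type u) [MetricSpace X] : Set X :=
  ⋃₀ {e : Set X | IsEdgeIn (univ : Set X) e ∧ e ∩ endPtsIn (univ : Set X) = ∅}

/-- `Sub_p(T(X))`: subtrees of `T(X)` containing `p` (subcontinua of `T(X)` all of whose
edges are edges of `X`). -/
def SubTreesP (X : Type u) [MetricSpace X] (p : X) : Set (Set X) :=
  {Y | Y ⊆ Tpart X ∧ p ∈ Y ∧ IsCompact Y ∧ IsConnected Y ∧
    ∀ e : Set X, IsEdgeIn Y e → IsEdgeIn (univ : Set X) e}

/-- Subtrees of the tree `X`. -/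
def Subtrees (X : Type u) [MetricSpace X] : Set (Set X) :=
  {Y | IsCompact Y ∧ IsConnected Y ∧
    ∀ e : Set X, IsEdgeIn Y e → IsEdgeIn (univ : Set X) e}

/-- The smallest subtree of `X` containing `a` and `b`. -/
def treeHull (X : Type u) [MetricSpace X] (a b : X) : Set X :=
  ⋂₀ {Y | Y ∈ Subtrees X ∧ a ∈ Y ∧ b ∈ Y}

/-- The hyperspace `C(p,X)` of subcontinua of `X` containing `p`,
with the Hausdorff metric. -/
def CP (X : Type u) [MetricSpace X] (p : X) : Type u :=
  {A : NonemptyCompacts X // IsConnected (A : Set X) ∧ p ∈ (A : Set X)}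

noncomputable instance (X : Type u) [MetricSpace X] (p : X) : MetricSpace (CP X p) :=
  inferInstanceAs (MetricSpace
    {A : NonemptyCompacts X // IsConnected (A : Set X) ∧ p ∈ (A : Set X)})

/-- The underlying subset of `X` of an element of `C(p,X)`. -/
def CP.set {X : Type u} [MetricSpace X] {p : X} (A : CP X p) : Set X := (A.1 : Set X)

/-- `U_n(X)`: elements of `C(p,X)` having a neighborhood in `C(p,X)` homeomorphic to
the `n`-cell `[0,1]^n`. -/
def Un (X : Type u) [MetricSpace X] (p : X) (n : ℕ) : Set (CP X p) :=
  {A | ∃ N : Set (CP X p), N ∈ 𝓝 A ∧ Nonempty (↥N ≃ₜ (Fin n → ↥(Icc (0 : ℝ) 1)))}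

/-- `𝒰(X) = ⋃ₙ U_n(X)`. -/
def UnionUn (X : Type u) [MetricSpace X] (p : X) : Set (CP X p) := ⋃ n : ℕ, Un X p n

/-- The edges of `X` which are not edges of `Y` and intersect `Y`. -/
def incidentE (X : Type u) [MetricSpace X] (Y : Set X) : Set (Set X) :=
  {e | IsEdgeIn (univ : Set X) e ∧ ¬ IsEdgeIn Y e ∧ (e ∩ Y).Nonempty}

/-- `U_Y`: elements of `C(p,X)` of the form `Y` together with exactly one interior point
of each edge of `X` incident on `Y`. -/
def UofY (X : Type u) [MetricSpace X] (p : X) (Y : Set X) : Set (CP X p) :=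
  {B | ∃ f : ↥(incidentE X Y) → X,
    (∀ e : ↥(incidentE X Y), f e ∈ arcInterior (e : Set X)) ∧ B.set = Y ∪ range f}

/-- `(X,p)` has unique hyperspace `C(p,X)` in the class of trees. -/
def UniqueHyperspaceInTrees (X : Type u) [MetricSpace X] (p : X) : Prop :=
  ∀ (Y : Type u) [MetricSpace Y], IsTree Y → ∀ q : Y,
    Nonempty (CP X p ≃ₜ CP Y q) → ∃ 𝔥 : X ≃ₜ Y, 𝔥 p = q

/-! ### A cubical Sperner lemma -/

namespace CubicalSperner

/-- The coboundary of a cubical cochain mod 2 on the lattice `ℕ → ℕ`; a cochain assigns a value to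
the cube with lowest vertex `v` spanned by the directions in `T`. -/
def coboundary (a : Finset ℕ → (ℕ → ℕ) → ZMod 2) (T : Finset ℕ) (v : ℕ → ℕ) : ZMod 2 :=
  ∑ t ∈ T, (a (T.erase t) (v + Pi.single t 1) + a (T.erase t) v)

/-- The vertex of the cube at `v` obtained by moving one step in the directions of `T`. -/
def vertex (T : Finset ℕ) (v : ℕ → ℕ) : ℕ → ℕ := fun i => v i + if i ∈ T then 1 else 0

/-- The cup product of the coboundaries of the vertex labellings `s 0, …, s (k - 1)`. -/
def cup (s : ℕ → (ℕ → ℕ) → ZMod 2) : ℕ → Finset ℕ → (ℕ → ℕ) → ZMod 2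
  | 0 => fun _ _ => 1
  | k + 1 => coboundary fun T v => cup s k T v * s k (vertex T v)

lemma zmod_two_add_self (x : ZMod 2) : x + x = 0 := CharTwo.add_self_eq_zero x

lemma coboundary_coboundary (a : Finset ℕ → (ℕ → ℕ) → ZMod 2) (T : Finset ℕ) (v : ℕ → ℕ) :
    coboundary (coboundary a) T v = 0 := by
  unfold coboundary
  simp_rw [← Finset.sum_add_distrib]
  rw [Finset.sum_sigma']
  refine Finset.sum_involution (fun x _ => ⟨x.2, x.1⟩) ?_ ?_ ?_ ?_
  · rintro ⟨t, u⟩ h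
    simp only [Finset.erase_right_comm (a := u) (b := t), add_right_comm v (Pi.single u 1)]
    generalize a _ _ = x1
    generalize a _ _ = x2
    generalize a _ _ = x3
    generalize a _ _ = x4
    have h1 := zmod_two_add_self x1
    have h2 := zmod_two_add_self x2
    have h3 := zmod_two_add_self x3
    have h4 := zmod_two_add_self x4
    linear_combination h1 + h2 + h3 + h4
  · rintro ⟨t, u⟩ h _ heq
    simp only [Finset.mem_sigma, Finset.mem_erase] at h
    simp only [Sigma.mk.injEq] at heq
    exact h.2.1 heq.1
  · rintro ⟨t, u⟩ h
    simp only [Finset.mem_sigma, Finset.mem_erase] at h ⊢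
    exact ⟨h.2.2, Ne.symm h.2.1, h.1⟩
  · rintro ⟨t, u⟩ h
    rfl

variable (s : ℕ → (ℕ → ℕ) → ZMod 2)

lemma coboundary_cup (k : ℕ) (T : Finset ℕ) (v : ℕ → ℕ) : coboundary (cup s k) T v = 0 := by
  cases k with
  | zero => simp [coboundary, cup, zmod_two_add_self]
  | succ k => exact coboundary_coboundary _ T v

lemma vertex_erase_add_single {T : Finset ℕ} {t : ℕ} (ht : t ∈ T) (v : ℕ → ℕ) :
    vertex (T.erase t) (v + Pi.single t 1) = vertex T v := by
  funext i
  by_cases h : i = t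
  · subst h; simp [vertex, ht]
  · simp [vertex, h]

lemma cup_succ (k : ℕ) (T : Finset ℕ) (v : ℕ → ℕ) :
    cup s (k + 1) T v =
      ∑ t ∈ T, cup s k (T.erase t) v * (s k (vertex T v) + s k (vertex (T.erase t) v)) := by
  have h := coboundary_cup s k T v
  simp only [coboundary] at h
  rw [← sub_eq_zero, ← mul_zero (s k (vertex T v)), ← h, cup, coboundary, Finset.mul_sum,
    ← Finset.sum_sub_distrib]
  refine Finset.sum_congr rfl fun t ht => ?_
  rw [vertex_erase_add_single ht]
  linear_combination -zmod_two_add_self (cup s k (T.erase t) v * s k (vertex T v))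

lemma cup_eq_zero {j : ℕ} : ∀ {k : ℕ}, j < k → ∀ {T : Finset ℕ} {v : ℕ → ℕ},
    (∀ U ⊆ T, s j (vertex U v) = s j v) → cup s k T v = 0
  | 0, hj, _, _, _ => absurd hj (Nat.not_lt_zero j)
  | k + 1, hj, T, v, h => by
    rw [cup_succ]
    refine Finset.sum_eq_zero fun t ht => ?_
    rcases Nat.lt_succ_iff_lt_or_eq.1 hj with hk | rfl
    · rw [cup_eq_zero hk fun U hU => h U (hU.trans (Finset.erase_subset t T)), zero_mul]
    · rw [h T subset_rfl, h _ (Finset.erase_subset t T), zmod_two_add_self, mul_zero]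

/-- Sum of `F` over the lattice points with the first `k` coordinates less than `N` and the other
coordinates equal to those of `w`. -/
def boxSum (N : ℕ) : ℕ → ((ℕ → ℕ) → ZMod 2) → (ℕ → ℕ) → ZMod 2
  | 0, F, w => F w
  | k + 1, F, w => ∑ j ∈ Finset.range N, boxSum N k F (Function.update w k j)

variable {N : ℕ}

lemma boxSum_congr : ∀ {k : ℕ} {F G : (ℕ → ℕ) → ZMod 2} {w : ℕ → ℕ},
    (∀ v, (∀ i, k ≤ i → v i = w i) → F v = G v) → boxSum N k F w = boxSum N k G w
  | 0, _, _, w, h => h w fun _ _ => rfl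
  | k + 1, _, _, w, h => by
    refine Finset.sum_congr rfl fun j _ => boxSum_congr fun v hv => h v fun i hi => ?_
    rw [hv i (by omega), Function.update_of_ne (by omega)]

lemma boxSum_add : ∀ (k : ℕ) (F G : (ℕ → ℕ) → ZMod 2) (w : ℕ → ℕ),
    boxSum N k (fun v => F v + G v) w = boxSum N k F w + boxSum N k G w
  | 0, _, _, _ => rfl
  | k + 1, F, G, w => by
    simp only [boxSum, boxSum_add k, Finset.sum_add_distrib]

lemma boxSum_zero : ∀ (k : ℕ) (w : ℕ → ℕ), boxSum N k (fun _ => 0) w = 0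
  | 0, _ => rfl
  | k + 1, w => by simp only [boxSum, boxSum_zero k, Finset.sum_const_zero]

lemma boxSum_sum (k : ℕ) (T : Finset ℕ) (F : ℕ → (ℕ → ℕ) → ZMod 2) (w : ℕ → ℕ) :
    boxSum N k (fun v => ∑ t ∈ T, F t v) w = ∑ t ∈ T, boxSum N k (F t) w := by
  induction T using Finset.induction_on with
  | empty => simp [boxSum_zero]
  | insert t T ht ih => simp only [Finset.sum_insert ht, boxSum_add, ih]

lemma boxSum_shift : ∀ {k t : ℕ}, k ≤ t → ∀ (F : (ℕ → ℕ) → ZMod 2) (w : ℕ → ℕ),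
    boxSum N k (fun v => F (v + Pi.single t 1)) w = boxSum N k F (w + Pi.single t 1)
  | 0, _, _, _, _ => rfl
  | k + 1, t, h, F, w => by
    refine Finset.sum_congr rfl fun j _ => ?_
    rw [boxSum_shift (by omega)]
    congr 1
    funext i
    by_cases hi : i = k
    · subst hi; simp [show i ≠ t by omega]
    · simp [hi]

lemma boxSum_succ_diff (k : ℕ) (F : (ℕ → ℕ) → ZMod 2) (w : ℕ → ℕ) :
    boxSum N (k + 1) (fun v => F (v + Pi.single k 1) + F v) w =
      boxSum N k F (Function.update w k N) + boxSum N k F (Function.update w k 0) := by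
  have key : ∀ j, Function.update w k j + Pi.single k 1 = Function.update w k (j + 1) := by
    intro j
    funext i
    by_cases hi : i = k
    · subst hi; simp
    · simp [hi]
  simp only [boxSum, boxSum_add, boxSum_shift le_rfl, key]
  have := Finset.sum_range_sub (fun j => boxSum N k F (Function.update w k j)) N
  simpa only [CharTwo.sub_eq_add] using this

lemma boxSum_diff_eq_zero {t : ℕ} {F : (ℕ → ℕ) → ZMod 2}
    (h0 : ∀ v, v t = 0 → F v = 0) (hN : ∀ v, v t = N → F v = 0) :
    ∀ {k : ℕ}, t < k → ∀ w : ℕ → ℕ, boxSum N k (fun v => F (v + Pi.single t 1) + F v) w = 0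
  | 0, h, _ => absurd h (Nat.not_lt_zero t)
  | k + 1, h, w => by
    rcases Nat.lt_succ_iff_lt_or_eq.1 h with hk | rfl
    · exact Finset.sum_eq_zero fun j _ => boxSum_diff_eq_zero h0 hN hk _
    · rw [boxSum_succ_diff, boxSum_congr (G := fun _ => 0), boxSum_congr (F := F) (G := fun _ => 0)]
      · simp [boxSum_zero]
      · exact fun v hv => h0 v (by simp [hv t le_rfl])
      · exact fun v hv => hN v (by simp [hv t le_rfl])

lemma exists_ne_zero_of_boxSum_ne_zero : ∀ {k : ℕ} {F : (ℕ → ℕ) → ZMod 2} {w : ℕ → ℕ},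
    boxSum N k F w ≠ 0 → ∃ v, (∀ i < k, v i < N) ∧ F v ≠ 0 ∧ ∀ i, k ≤ i → v i = w i
  | 0, _, w, h => ⟨w, by simp, h, fun _ _ => rfl⟩
  | k + 1, F, w, h => by
    obtain ⟨j, hj, hne⟩ := Finset.exists_ne_zero_of_sum_ne_zero h
    obtain ⟨v, hv, hF, hw⟩ := exists_ne_zero_of_boxSum_ne_zero hne
    refine ⟨v, fun i hi => ?_, hF, fun i hi => ?_⟩
    · rcases Nat.lt_succ_iff_lt_or_eq.1 hi with hk | rfl
      · exact hv i hk
      · simpa [hw i le_rfl] using hj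
    · rw [hw i (by omega), Function.update_of_ne (by omega)]

lemma boxSum_cup (h0 : ∀ i v, v i = 0 → s i v = 0) (h1 : ∀ i v, v i = N → s i v = 1) :
    ∀ (k : ℕ) (w : ℕ → ℕ), boxSum N k (cup s k (Finset.range k)) w = 1
  | 0, _ => rfl
  | k + 1, w => by
    have hvert : ∀ {U : Finset ℕ} {t : ℕ} (v : ℕ → ℕ), t ∉ U → vertex U v t = v t := by
      intro U t v ht; simp [vertex, ht]
    change boxSum N (k + 1) (fun v => ∑ t ∈ Finset.range (k + 1), _) w = 1
    rw [boxSum_sum, Finset.sum_range_succ, Finset.sum_eq_zero, zero_add]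
    · have he : (Finset.range (k + 1)).erase k = Finset.range k := by
        ext i; simp; omega
      rw [he, boxSum_succ_diff k (fun v => cup s k (Finset.range k) v *
        s k (vertex (Finset.range k) v)), boxSum_congr (G := cup s k (Finset.range k)),
        boxSum_congr (w := Function.update w k 0) (G := fun _ => 0), boxSum_zero, add_zero,
        boxSum_cup h0 h1 k]
      · intro v hv
        rw [h0 k _ (by rw [hvert v (by simp), hv k le_rfl]; simp), mul_zero]
      · intro v hv
        rw [h1 k _ (by rw [hvert v (by simp), hv k le_rfl]; simp), mul_one]
    · intro t ht
      have htk : t < k := Finset.mem_range.1 ht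
      refine boxSum_diff_eq_zero (F := fun v => cup s k ((Finset.range (k + 1)).erase t) v *
        s k (vertex ((Finset.range (k + 1)).erase t) v)) (t := t) ?_ ?_ (by omega) w
      · intro v hv
        refine mul_eq_zero_of_left (cup_eq_zero s htk fun U hU => ?_) _
        have : t ∉ U := fun h => by simpa using hU h
        rw [h0 t v hv, h0 t _ (by rw [hvert v this, hv])]
      · intro v hv
        refine mul_eq_zero_of_left (cup_eq_zero s htk fun U hU => ?_) _
        have : t ∉ U := fun h => by simpa using hU h
        rw [h1 t v hv, h1 t _ (by rw [hvert v this, hv])]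

/-- If each labelling `s i` is `0` on the face `v i = 0` and `1` on the face `v i = N` of a
cubical grid, then some unit cube of the grid is such that no `s i` is constant on it. -/
theorem exists_cube (h0 : ∀ i v, v i = 0 → s i v = 0) (h1 : ∀ i v, v i = N → s i v = 1) (n : ℕ) :
    ∃ v : ℕ → ℕ, (∀ i < n, v i < N) ∧ ∀ i < n, ∃ U, s i (vertex U v) ≠ s i v := by
  obtain ⟨v, hv, hc, -⟩ := exists_ne_zero_of_boxSum_ne_zero (N := N) (k := n) (w := 0)
    (F := cup s n (Finset.range n)) (by rw [boxSum_cup s h0 h1]; exact one_ne_zero)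
  refine ⟨v, hv, fun i hi => ?_⟩
  by_contra! h
  exact hc (cup_eq_zero s hi fun U _ => h U)

end CubicalSperner

/-! ### The Poincaré–Miranda theorem and invariance of dimension -/

/-- The Poincaré–Miranda theorem. -/
theorem poincare_miranda {n : ℕ} {F : (Fin n → ℝ) → Fin n → ℝ} (hF : Continuous F)
    (h0 : ∀ x ∈ Icc (0 : Fin n → ℝ) 1, ∀ i, x i = 0 → F x i = 0)
    (h1 : ∀ x ∈ Icc (0 : Fin n → ℝ) 1, ∀ i, x i = 1 → F x i = 1) :
    ∃ x ∈ Icc (0 : Fin n → ℝ) 1, ∀ i, F x i = 1 / 2 := by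
  classical
  obtain ⟨x₀, hx₀, hmin⟩ := (isCompact_Icc (a := (0 : Fin n → ℝ)) (b := 1)).exists_isMinOn
    ⟨0, left_mem_Icc.2 zero_le_one⟩
    (f := fun x => dist (F x) fun _ => 1 / 2) (by fun_prop)
  rcases eq_or_lt_of_le (dist_nonneg (x := F x₀) (y := fun _ => 1 / 2)) with h | hε
  · exact ⟨x₀, hx₀, fun i => congrFun (dist_eq_zero.1 h.symm) i⟩
  exfalso
  set ε := dist (F x₀) fun _ => 1 / 2
  obtain ⟨δ, hδ, hu⟩ := Metric.uniformContinuousOn_iff.1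
    ((isCompact_Icc (a := (0 : Fin n → ℝ)) (b := 1)).uniformContinuousOn_of_continuous
      hF.continuousOn) ε hε
  obtain ⟨N, hN⟩ := exists_nat_one_div_lt hδ
  have hN0 : (0 : ℝ) < (N + 1 : ℕ) := by positivity
  let pt : (ℕ → ℕ) → Fin n → ℝ := fun v i => min ((v i : ℝ) / (N + 1 : ℕ)) 1
  have hpt : ∀ v, pt v ∈ Icc (0 : Fin n → ℝ) 1 := fun v =>
    ⟨fun i => le_min (by positivity) zero_le_one, fun i => min_le_right _ _⟩
  let s : ℕ → (ℕ → ℕ) → ZMod 2 := fun i v =>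
    if h : i < n then if 1 / 2 ≤ F (pt v) ⟨i, h⟩ then 1 else 0
    else if v i = 0 then 0 else 1
  obtain ⟨v, hv, hs⟩ := CubicalSperner.exists_cube s (N := N + 1)
    (fun i v hv => by
      by_cases h : i < n
      · have : F (pt v) ⟨i, h⟩ = 0 := h0 _ (hpt v) _ (by simp [pt, hv])
        simp only [s, h, this, dite_true]
        norm_num
      · simp [s, h, hv])
    (fun i v hv => by
      by_cases h : i < n
      · have : F (pt v) ⟨i, h⟩ = 1 := h1 _ (hpt v) _ (by simp only [pt, hv]; field_simp; simp)
        simp only [s, h, this, dite_true]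
        norm_num
      · simp [s, h, hv]) n
  have hclose : dist (F (pt v)) (fun _ => 1 / 2) < ε := by
    rw [dist_pi_lt_iff hε]
    intro i
    obtain ⟨U, hU⟩ := hs i i.2
    have hd : dist (F (pt (CubicalSperner.vertex U v))) (F (pt v)) < ε := by
      refine hu _ (hpt _) _ (hpt _) ((dist_pi_lt_iff hδ).2 fun j => lt_of_le_of_lt ?_ hN)
      have hw : v j + 1 ≤ N + 1 := hv j j.2
      have hw' : CubicalSperner.vertex U v j ≤ N + 1 := by
        unfold CubicalSperner.vertex; split_ifs <;> omega
      have e1 : ∀ a : ℕ, a ≤ N + 1 → min ((a : ℝ) / (N + 1 : ℕ)) 1 = (a : ℝ) / (N + 1 : ℕ) :=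
        fun a ha => min_eq_left (div_le_one_of_le₀ (by exact_mod_cast ha) hN0.le)
      simp only [pt, e1 _ hw', e1 _ (by omega : v j ≤ N + 1), Real.dist_eq]
      rw [← sub_div, abs_div, abs_of_pos hN0]
      push_cast
      gcongr
      unfold CubicalSperner.vertex
      split_ifs <;> simp
    have hdi := lt_of_le_of_lt (dist_le_pi_dist _ _ i) hd
    rw [Real.dist_eq, abs_lt] at hdi
    simp only [s, i.2, dite_true] at hU
    rw [Real.dist_eq, abs_lt]
    simp only [Fin.eta] at hU
    split_ifs at hU with ha hb hb
    · exact absurd rfl hU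
    · constructor <;> linarith
    · constructor <;> linarith
    · exact absurd rfl hU
  exact absurd (hmin (hpt v)) (not_le.2 hclose)

lemma isClosed_of_uniformly_clopen {α β : Type*} [PseudoMetricSpace α] [PseudoMetricSpace β]
    {G : α → β} {S T : Set α} (hS : IsClosed S) (hG : ContinuousOn G S) (hTS : T ⊆ S)
    (h : ∀ x ∈ S, ∀ y ∈ T, dist (G y) (G x) < 1 → x ∈ T) : IsClosed T := by
  refine isClosed_of_closure_subset fun x hx => ?_
  have hxS : x ∈ S := closure_minimal hTS hS hx
  obtain ⟨δ, hδ, hd⟩ := Metric.continuousWithinAt_iff.1 (hG x hxS) 1 one_pos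
  obtain ⟨y, hy, hxy⟩ := Metric.mem_closure_iff.1 hx δ hδ
  exact h x hxS y hy (hd (hTS hy) (by rwa [dist_comm]))

/-- There is no continuous injection of an `n`-cube into `ℝ^m` for `m < n`. -/
theorem not_injOn_cube {m n : ℕ} (hmn : m < n) {g : (Fin n → ℝ) → Fin m → ℝ}
    (hg : ContinuousOn g (Icc 0 1)) (hinj : InjOn g (Icc 0 1)) : False := by
  classical
  set Q : Set (Fin n → ℝ) := Icc 0 1
  have hQ : IsCompact Q := isCompact_Icc
  set M : ℝ := m + 1
  have hM : 0 < M := by positivity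
  obtain ⟨c, hc⟩ : ∃ c : ℝ, ∀ x ∈ Q, ∀ y ∈ Q, dist (c • g x) (c • g y) ≤ M → dist x y < 1 := by
    let D : Set ((Fin n → ℝ) × (Fin n → ℝ)) := (Q ×ˢ Q) ∩ {p | 1 ≤ dist p.1 p.2}
    have hD : IsCompact D := (hQ.prod hQ).inter_right
      (isClosed_le continuous_const (continuous_fst.dist continuous_snd))
    have hcont : ContinuousOn (fun p : (Fin n → ℝ) × (Fin n → ℝ) => dist (g p.1) (g p.2)) D :=
      continuous_dist.comp_continuousOn
        ((hg.comp (t := Q) continuousOn_fst fun p hp => hp.1.1).prodMk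
          (hg.comp (t := Q) continuousOn_snd fun p hp => hp.1.2))
    rcases D.eq_empty_or_nonempty with hempty | hne
    · refine ⟨1, fun x hx y hy _ => ?_⟩
      by_contra! hlt
      exact (hempty ▸ (show (x, y) ∈ D from ⟨⟨hx, hy⟩, hlt⟩) : (x, y) ∈ (∅ : Set _))
    · obtain ⟨p, hp, hmin⟩ := hD.exists_isMinOn hne hcont
      have hpos : 0 < dist (g p.1) (g p.2) := by
        refine dist_pos.2 fun h => ?_
        have h2 : (1 : ℝ) ≤ dist p.1 p.2 := hp.2
        rw [hinj hp.1.1 hp.1.2 h, dist_self] at h2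
        linarith
      refine ⟨2 * M / dist (g p.1) (g p.2), fun x hx y hy h => ?_⟩
      by_contra! hlt
      have h3 : dist (g p.1) (g p.2) ≤ dist (g x) (g y) :=
        hmin (show (x, y) ∈ D from ⟨⟨hx, hy⟩, hlt⟩)
      rw [dist_smul₀, Real.norm_of_nonneg (by positivity), div_mul_eq_mul_div,
        div_le_iff₀ hpos] at h
      nlinarith
  set G : (Fin n → ℝ) → Fin m → ℝ := fun x => c • g x
  have hG : ContinuousOn G Q := hg.const_smul c
  let S : Fin n → Set (Fin n → ℝ) := fun k =>
    {x ∈ Q | ∀ (i : Fin m) (a : ℤ), 1 / 2 ≤ |G x i - k - M * a|}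
  let idx : Fin n → (Fin n → ℝ) → Fin m → ℤ := fun k x i => ⌊(G x i - k) / M⌋
  have hSQ : ∀ k, S k ⊆ Q := fun k x hx => hx.1
  have hSc : ∀ k, IsClosed (S k) := by
    intro k
    have hcl : IsClosed {y : Fin m → ℝ | ∀ (i : Fin m) (a : ℤ), 1 / 2 ≤ |y i - k - M * a|} := by
      simp only [ofPred_forall]
      exact isClosed_iInter fun i => isClosed_iInter fun a =>
        isClosed_le continuous_const (by fun_prop)
    exact hG.preimage_isClosed_of_isClosed hQ.isClosed hcl
  have hidx_near : ∀ k, ∀ x ∈ S k, ∀ y ∈ S k, dist (G y) (G x) < 1 → idx k x = idx k y := by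
    have key : ∀ k, ∀ x ∈ S k, ∀ y ∈ S k, dist (G y) (G x) < 1 → ∀ i, idx k x i ≤ idx k y i := by
      intro k x hx y hy hxy i
      have hd := lt_of_le_of_lt (dist_le_pi_dist _ _ i) hxy
      rw [Real.dist_eq, abs_lt] at hd
      refine Int.le_floor.2 ?_
      rw [le_div_iff₀ hM]
      have h1 : (idx k x i : ℝ) ≤ (G x i - k) / M := Int.floor_le _
      rw [le_div_iff₀ hM] at h1
      have hx2 := hx.2 i (idx k x i)
      have hy2 := hy.2 i (idx k x i)
      rw [abs_of_nonneg (by linarith)] at hx2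
      by_contra! hlt
      rw [abs_of_nonpos (by linarith)] at hy2
      linarith
    intro k x hx y hy hxy
    funext i
    exact le_antisymm (key k x hx y hy hxy i) (key k y hy x hx (by rwa [dist_comm]) i)
  have hidx_diam : ∀ k x y, x ∈ Q → y ∈ Q → idx k x = idx k y → dist x y < 1 := by
    intro k x y hx hy h
    refine hc x hx y hy ((dist_pi_le_iff hM.le).2 fun i => ?_)
    have hi := Int.abs_sub_lt_one_of_floor_eq_floor (congrFun h i)
    rw [← sub_div, abs_div, abs_of_pos hM, div_lt_one hM] at hi
    rw [Real.dist_eq]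
    refine le_of_lt ?_
    simpa [G] using hi
  let A : Fin n → Set (Fin n → ℝ) := fun k =>
    {x ∈ S k | ∃ y ∈ S k, y k = 0 ∧ idx k x = idx k y}
  have hA : ∀ k, IsClosed (A k) := fun k =>
    isClosed_of_uniformly_clopen (hSc k) (hG.mono (hSQ k)) (fun x hx => hx.1) (by
      rintro x hx y ⟨hy, z, hz, hz0, hyz⟩ hd
      exact ⟨hx, z, hz, hz0, (hidx_near k x hx y hy hd).trans hyz⟩)
  have hB : ∀ k, IsClosed (S k \ A k) := fun k =>
    isClosed_of_uniformly_clopen (hSc k) (hG.mono (hSQ k)) (fun x hx => hx.1) (by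
      rintro x hx y ⟨hy, hyA⟩ hd
      refine ⟨hx, fun hxA => hyA ⟨hy, ?_⟩⟩
      obtain ⟨-, z, hz, hz0, hxz⟩ := hxA
      exact ⟨z, hz, hz0, (hidx_near k x hx y hy hd).symm.trans hxz⟩)
  have hface : ∀ (k : Fin n) (r : ℝ), IsClosed {x ∈ Q | x k = r} := fun k r =>
    hQ.isClosed.inter (isClosed_eq (continuous_apply k) continuous_const)
  have hf : ∀ k : Fin n, ∃ f : C(Fin n → ℝ, ℝ), EqOn f 0 (A k ∪ {x ∈ Q | x k = 0}) ∧
      EqOn f 1 ((S k \ A k) ∪ {x ∈ Q | x k = 1}) := by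
    intro k
    obtain ⟨f, h0, h1, -⟩ := exists_continuous_zero_one_of_isClosed ((hA k).union (hface k 0))
      ((hB k).union (hface k 1)) (by
        rw [Set.disjoint_left]
        rintro x (⟨hx, y, hy, hy0, hxy⟩ | ⟨hx, hx0⟩) (⟨hxS, hxA⟩ | ⟨-, hx1⟩)
        · exact hxA ⟨hx, y, hy, hy0, hxy⟩
        · have hd := lt_of_le_of_lt (dist_le_pi_dist x y k) (hidx_diam k x y hx.1 hy.1 hxy)
          rw [hx1, hy0] at hd
          simp at hd
        · exact hxA ⟨hxS, x, hxS, hx0, rfl⟩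
        · rw [hx0] at hx1; exact zero_ne_one hx1)
    exact ⟨f, h0, h1⟩
  choose f hf0 hf1 using hf
  obtain ⟨x, hx, hxf⟩ := poincare_miranda (F := fun x k => f k x) (by fun_prop)
    (fun x hx k hk => hf0 k (Or.inr ⟨hx, hk⟩)) (fun x hx k hk => hf1 k (Or.inr ⟨hx, hk⟩))
  obtain ⟨k, hk⟩ : ∃ k, x ∈ S k := by
    by_contra! hnot
    have hbad : ∀ k : Fin (m + 1), ∃ (i : Fin m) (a : ℤ), |G x i - (k : ℕ) - M * a| < 1 / 2 := by
      intro k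
      have := hnot ⟨k, by omega⟩
      simp only [S, mem_ofPred, not_and, not_forall, not_le] at this
      exact this hx
    choose i a hia using hbad
    obtain ⟨k, k', hne, hi⟩ := Fintype.exists_ne_map_eq_of_card_lt i (by simp)
    have e1 := hia k
    have e2 := hia k'
    rw [← hi] at e2
    rw [abs_lt] at e1 e2
    have e3 : |((((k : ℕ) : ℤ) + (m + 1) * a k - ((k' : ℕ) + (m + 1) * a k') : ℤ) : ℝ)| < 1 := by
      push_cast
      rw [abs_lt]
      constructor <;> simp only [M] at e1 e2 <;> linarith
    have e4 : ((k : ℕ) : ℤ) + (m + 1) * a k - ((k' : ℕ) + (m + 1) * a k') = 0 := by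
      rw [← Int.cast_abs] at e3
      exact Int.abs_lt_one_iff.1 (by exact_mod_cast e3)
    have e5 : ((k : ℕ) : ℤ) - (k' : ℕ) = (m + 1) * (a k' - a k) := by linear_combination e4
    have e6 : |((k : ℕ) : ℤ) - (k' : ℕ)| < m + 1 := by
      rw [abs_lt]
      have := k.2
      have := k'.2
      constructor <;> omega
    have e7 : ((k : ℕ) : ℤ) - (k' : ℕ) = 0 := Int.eq_zero_of_abs_lt_dvd ⟨_, e5⟩ e6
    exact hne (Fin.ext (by omega))
  have hval := hxf k
  by_cases hxA : x ∈ A k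
  · have := hf0 k (Or.inl hxA)
    simp_all
  · have := hf1 k (Or.inl ⟨hk, hxA⟩)
    simp only [Pi.one_apply] at this
    linarith

/-- Two overlapping Euclidean charts of a space have the same dimension. -/
theorem chart_dim_le {K : Type*} [TopologicalSpace K] {m n : ℕ} {U V : Set K}
    (hV : IsOpen V) (e : U ≃ₜ (Fin n → ℝ)) (e' : V ≃ₜ (Fin m → ℝ)) (hUV : (U ∩ V).Nonempty) :
    n ≤ m := by
  by_contra! hmn
  obtain ⟨x, hxU, hxV⟩ := hUV
  have hW : IsOpen {y : Fin n → ℝ | (e.symm y : K) ∈ V} :=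
    hV.preimage (continuous_subtype_val.comp e.symm.continuous)
  obtain ⟨r, hr, hball⟩ := Metric.isOpen_iff.1 hW (e ⟨x, hxU⟩) (by simpa using hxV)
  set a := e ⟨x, hxU⟩
  have hmem : ∀ y ∈ Icc (0 : Fin n → ℝ) 1, (e.symm (a + (r / 2) • y) : K) ∈ V := by
    intro y hy
    refine hball ?_
    rw [Metric.mem_ball, dist_pi_lt_iff hr]
    intro i
    have h0 := hy.1 i
    have h1 := hy.2 i
    simp only [Pi.zero_apply, Pi.one_apply] at h0 h1
    simp only [Pi.add_apply, Pi.smul_apply, smul_eq_mul, Real.dist_eq, add_sub_cancel_left]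
    rw [abs_of_nonneg (by positivity)]
    nlinarith
  let c : Icc (0 : Fin n → ℝ) 1 → Fin m → ℝ := fun y => e' ⟨_, hmem y y.2⟩
  have hc : Continuous c := by
    refine e'.continuous.comp (Continuous.subtype_mk ?_ _)
    exact continuous_subtype_val.comp (e.symm.continuous.comp (by fun_prop))
  have hci : Function.Injective c := by
    intro y z h
    have h1 : (e.symm (a + (r / 2) • (y : Fin n → ℝ)) : K) = e.symm (a + (r / 2) • (z : _)) :=
      Subtype.mk.inj (e'.injective h)
    have h2 := e.symm.injective (Subtype.ext h1)
    ext i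
    have h3 := congrFun h2 i
    simp only [Pi.add_apply, Pi.smul_apply, smul_eq_mul, add_right_inj] at h3
    exact mul_left_cancel₀ (by positivity) h3
  classical
  refine not_injOn_cube hmn
    (g := fun y => if h : y ∈ Icc (0 : Fin n → ℝ) 1 then c ⟨y, h⟩ else 0) ?_ ?_
  · rw [continuousOn_iff_continuous_domRestrict]
    convert hc using 1
    funext y
    simp only [domRestrict_apply, y.2, dite_true]
  · intro y hy z hz h
    simp only [hy, hz, dite_true] at h
    exact Subtype.ext_iff.1 (hci h)

theorem chart_dim_eq {K : Type*} [TopologicalSpace K] {m n : ℕ} {U V : Set K} (hU : IsOpen U)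
    (hV : IsOpen V) (e : U ≃ₜ (Fin n → ℝ)) (e' : V ≃ₜ (Fin m → ℝ)) (hUV : (U ∩ V).Nonempty) :
    n = m :=
  le_antisymm (chart_dim_le hV e e' hUV) (chart_dim_le hU e' e (by rwa [inter_comm]))

/-! ### Spaces glued from cells of various dimensions -/

section CellComplex

variable {K K' ι ι' : Type*} [TopologicalSpace K'] [TopologicalSpace K]

/-- The points of `K` having an open neighbourhood homeomorphic to `ℝ^d`. -/
def chartUnion (K : Type*) [TopologicalSpace K] (d : ℕ) : Set K :=
  {x | ∃ U : Set K, IsOpen U ∧ Nonempty (U ≃ₜ (Fin d → ℝ)) ∧ x ∈ U}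

/-- `C` is the closure of a component of the set of points of `K` that are locally `ℝ^d`. -/
def IsMaximalCell (d : ℕ) (C : Set K) : Prop :=
  ∃ x ∈ chartUnion K d, C = closure (connectedComponentIn (chartUnion K d) x)

lemma Homeomorph.map_mem_chartUnion (h : K ≃ₜ K') {d : ℕ} {x : K} (hx : x ∈ chartUnion K d) :
    h x ∈ chartUnion K' d := by
  obtain ⟨U, hU, ⟨e⟩, hx⟩ := hx
  exact ⟨h '' U, h.isOpenMap U hU, ⟨(h.image U).symm.trans e⟩, mem_image_of_mem h hx⟩

lemma Homeomorph.image_chartUnion (h : K ≃ₜ K') (d : ℕ) :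
    h '' chartUnion K d = chartUnion K' d :=
  Subset.antisymm (image_subset_iff.2 fun _ => h.map_mem_chartUnion) fun y hy =>
    ⟨h.symm y, h.symm.map_mem_chartUnion hy, h.apply_symm_apply y⟩

lemma IsMaximalCell.image {d : ℕ} {C : Set K} (hC : IsMaximalCell d C) (h : K ≃ₜ K') :
    IsMaximalCell d (h '' C) := by
  obtain ⟨x, hx, rfl⟩ := hC
  refine ⟨h x, ?_, ?_⟩
  · rw [← h.image_chartUnion]; exact mem_image_of_mem h hx
  · rw [h.image_closure, h.image_connectedComponentIn hx, h.image_chartUnion]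

/-- A family of closed cells `cell i` of dimension `d i` covering `K`, each of which is the closure
of an open chart, such that points in several cells lie in cells of different dimensions. -/
structure IsCellComplex (cell : ι → Set K) (d : ι → ℕ) : Prop where
  isClosed : ∀ i, IsClosed (cell i)
  chart : ∀ i, ∃ U : Set K, IsOpen U ∧ Nonempty (U ≃ₜ (Fin (d i) → ℝ)) ∧ U ⊆ cell i ∧
    cell i ⊆ closure U ∧ ∀ j, (U ∩ cell j).Nonempty → j = i
  cover : ∀ x, ∃ i, x ∈ cell i
  separated : ∀ i j x, x ∈ cell i → x ∈ cell j → i ≠ j →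
    ∃ k l, x ∈ cell k ∧ x ∈ cell l ∧ d k ≠ d l

namespace IsCellComplex

variable {cell : ι → Set K} {d : ι → ℕ} {cell' : ι' → Set K'} {d' : ι' → ℕ}

lemma injective (H : IsCellComplex cell d) : Function.Injective cell := by
  intro i j hij
  obtain ⟨U, -, ⟨e⟩, hU, -, hj⟩ := H.chart i
  exact (hj j ⟨e.symm 0, (e.symm 0).2, hij ▸ hU (e.symm 0).2⟩).symm

lemma dim_eq (H : IsCellComplex cell d) {n : ℕ} {x : K} (hx : x ∈ chartUnion K n) {i : ι}
    (hi : x ∈ cell i) : d i = n := by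
  obtain ⟨V, hV, ⟨e'⟩, hxV⟩ := hx
  obtain ⟨U, hU, ⟨e⟩, -, hcl, -⟩ := H.chart i
  obtain ⟨y, hyV, hyU⟩ := mem_closure_iff.1 (hcl hi) V hV hxV
  exact chart_dim_eq hU hV e e' ⟨y, hyU, hyV⟩

lemma eq_of_mem_chartUnion (H : IsCellComplex cell d) {n : ℕ} {x : K} (hx : x ∈ chartUnion K n)
    {i j : ι} (hi : x ∈ cell i) (hj : x ∈ cell j) : i = j := by
  by_contra hne
  obtain ⟨k, l, hk, hl, hkl⟩ := H.separated i j x hi hj hne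
  exact hkl ((H.dim_eq hx hk).trans (H.dim_eq hx hl).symm)

lemma closure_component [Finite ι] (H : IsCellComplex cell d) {n : ℕ} {x : K}
    (hx : x ∈ chartUnion K n) {i : ι} (hi : x ∈ cell i) :
    closure (connectedComponentIn (chartUnion K n) x) = cell i := by
  obtain rfl := H.dim_eq hx hi
  obtain ⟨U, hU, ⟨e⟩, hUc, hcl, -⟩ := H.chart i
  have hUO : U ⊆ chartUnion K (d i) := fun y hy => ⟨U, hU, ⟨e⟩, hy⟩
  have hUconn : IsPreconnected U := by
    rw [isPreconnected_iff_preconnectedSpace]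
    exact e.symm.surjective.denseRange.preconnectedSpace e.symm.continuous
  have hsub : connectedComponentIn (chartUnion K (d i)) x ⊆ cell i := by
    have hclosed : IsClosed (⋃ j : {j // j ≠ i}, cell j) :=
      isClosed_iUnion_of_finite fun j => H.isClosed j
    have hO := connectedComponentIn_subset (chartUnion K (d i)) x
    have hcov : connectedComponentIn (chartUnion K (d i)) x ⊆
        cell i ∪ ⋃ j : {j // j ≠ i}, cell j := fun y _ => by
      obtain ⟨j, hj⟩ := H.cover y
      by_cases hji : j = i
      · exact Or.inl (hji ▸ hj)
      · exact Or.inr (mem_iUnion.2 ⟨⟨j, hji⟩, hj⟩)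
    have hdisj : connectedComponentIn (chartUnion K (d i)) x ∩
        (cell i ∩ ⋃ j : {j // j ≠ i}, cell j) = ∅ := by
      refine eq_empty_of_forall_notMem fun y ⟨hy, hyi, hyj⟩ => ?_
      obtain ⟨⟨j, hj⟩, hyj⟩ := mem_iUnion.1 hyj
      exact hj (H.eq_of_mem_chartUnion (hO hy) hyj hyi)
    rcases (isPreconnected_iff_subset_of_disjoint_closed.1 isPreconnected_connectedComponentIn)
      _ _ (H.isClosed i) hclosed hcov hdisj with h | h
    · exact h
    · obtain ⟨⟨j, hj⟩, hxj⟩ := mem_iUnion.1 (h (mem_connectedComponentIn hx))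
      exact absurd (H.eq_of_mem_chartUnion hx hxj hi) hj
  refine Subset.antisymm (closure_minimal hsub (H.isClosed i)) (hcl.trans (closure_mono ?_))
  have hpre : IsPreconnected (chartUnion K (d i) ∩ cell i) :=
    hUconn.subset_closure (fun y hy => ⟨hUO hy, hUc hy⟩) fun y hy => hcl hy.2
  exact fun y hy => hpre.subset_connectedComponentIn ⟨hx, hi⟩ inter_subset_left ⟨hUO hy, hUc hy⟩

lemma isMaximalCell_iff [Finite ι] (H : IsCellComplex cell d) {n : ℕ} {C : Set K} :
    IsMaximalCell n C ↔ ∃ i, d i = n ∧ C = cell i := by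
  constructor
  · rintro ⟨x, hx, rfl⟩
    obtain ⟨i, hi⟩ := H.cover x
    exact ⟨i, H.dim_eq hx hi, H.closure_component hx hi⟩
  · rintro ⟨i, rfl, rfl⟩
    obtain ⟨U, hU, ⟨e⟩, hUc, -, -⟩ := H.chart i
    have hy := (e.symm 0).2
    exact ⟨_, ⟨U, hU, ⟨e⟩, hy⟩, (H.closure_component ⟨U, hU, ⟨e⟩, hy⟩ (hUc hy)).symm⟩

/-- A homeomorphism permutes the cells. -/
theorem exists_equiv [Finite ι] [Finite ι'] (H : IsCellComplex cell d)
    (H' : IsCellComplex cell' d') (h : K ≃ₜ K') :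
    ∃ φ : ι ≃ ι', ∀ i, d' (φ i) = d i ∧ h '' cell i = cell' (φ i) := by
  have h1 : ∀ i, ∃ j, d' j = d i ∧ h '' cell i = cell' j := fun i =>
    H'.isMaximalCell_iff.1 ((H.isMaximalCell_iff.2 ⟨i, rfl, rfl⟩).image h)
  have h2 : ∀ j, ∃ i, d i = d' j ∧ h.symm '' cell' j = cell i := fun j =>
    H.isMaximalCell_iff.1 ((H'.isMaximalCell_iff.2 ⟨j, rfl, rfl⟩).image h.symm)
  choose φ hφ using h1
  choose ψ hψ using h2
  refine ⟨⟨φ, ψ, fun i => H.injective ?_, fun j => H'.injective ?_⟩, hφ⟩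
  · rw [← (hψ _).2, ← (hφ _).2, ← image_comp]; simp
  · rw [← (hφ _).2, ← (hψ _).2, ← image_comp]; simp

end IsCellComplex

end CellComplex

/-! ### The order complex of a rooted forest and its cells -/

/-- The order of a rooted forest: the elements below a given one form a chain. -/
def IsForestOrder (E : Type*) [PartialOrder E] : Prop :=
  ∀ a b c : E, a ≤ c → b ≤ c → a ≤ b ∨ b ≤ a

/-- Above every non-maximal element the forest branches. -/
def IsBranchingOrder (E : Type*) [PartialOrder E] : Prop :=
  ∀ a b : E, a < b → ∃ c, a < c ∧ ¬ b ≤ c ∧ ¬ c ≤ b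

/-- The functions recording how much of each edge of a rooted forest is covered by a connected set
containing the root. -/
def rootedSets (E : Type*) [PartialOrder E] : Set (E → ℝ) :=
  {f | (∀ e, 0 ≤ f e ∧ f e ≤ 1) ∧ ∀ a b, a < b → f b = 0 ∨ f a = 1}

section Cells

variable {E : Type*} [PartialOrder E]

/-- The rooted sets containing all edges in `Y` and only edges whose predecessors are in `Y`. -/
def rootedCell (Y : Set E) : Set (E → ℝ) :=
  {f | (∀ e, 0 ≤ f e ∧ f e ≤ 1) ∧ (∀ y ∈ Y, f y = 1) ∧ ∀ a b, a < b → f b ≠ 0 → a ∈ Y}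

/-- The edges growing out of the lower set `Y`. -/
def outerFront (Y : Set E) : Set E := {e | (∀ a < e, a ∈ Y) ∧ e ∉ Y}

lemma rootedCell_subset_rootedSets {Y : Set E} : rootedCell Y ⊆ rootedSets E :=
  fun _ hf => ⟨hf.1, fun a b hab => or_iff_not_imp_left.2 fun hb => hf.2.1 a (hf.2.2 a b hab hb)⟩

lemma rootedCell_inter {Y Z : Set E} {f : E → ℝ} (hY : f ∈ rootedCell Y) (hZ : f ∈ rootedCell Z) :
    f ∈ rootedCell (Y ∩ Z) :=
  ⟨hY.1, fun y hy => hY.2.1 y hy.1, fun a b hab hb => ⟨hY.2.2 a b hab hb, hZ.2.2 a b hab hb⟩⟩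

lemma isClosed_rootedCell (Y : Set E) : IsClosed (rootedCell Y) := by
  have : rootedCell Y = (⋂ e, {f : E → ℝ | 0 ≤ f e ∧ f e ≤ 1}) ∩ ((⋂ y ∈ Y, {f | f y = 1}) ∩
      ⋂ b, ⋂ (_ : ∃ a < b, a ∉ Y), {f | f b = 0}) := by
    ext f
    simp only [rootedCell, mem_inter_iff, mem_iInter, mem_ofPred]
    refine and_congr_right fun _ => and_congr_right fun _ => ⟨fun h b ⟨a, hab, ha⟩ => ?_,
      fun h a b hab hb => ?_⟩
    · by_contra hb
      exact ha (h a b hab hb)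
    · by_contra ha
      exact hb (h b ⟨a, hab, ha⟩)
  rw [this]
  refine (isClosed_iInter fun e => ?_).inter ((isClosed_biInter fun y _ => ?_).inter
    (isClosed_iInter fun b => isClosed_iInter fun _ => ?_))
  · exact (isClosed_le continuous_const (continuous_apply e)).inter
      (isClosed_le (continuous_apply e) continuous_const)
  · exact isClosed_eq (continuous_apply y) continuous_const
  · exact isClosed_eq (continuous_apply b) continuous_const

lemma eq_of_mem_outerFront {Y : Set E} {m n : E} (hm : m ∈ outerFront Y) (hn : n ∈ outerFront Y)
    (h : m ≤ n ∨ n ≤ m) : m = n := by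
  rcases h with h | h
  · exact h.eq_or_lt.resolve_right fun h => hm.2 (hn.1 m h)
  · exact (h.eq_or_lt.resolve_right fun h => hn.2 (hm.1 n h)).symm

variable [Finite E]

lemma exists_outerFront_le {Y : Set E} {a : E} (ha : a ∉ Y) : ∃ n ∈ outerFront Y, n ≤ a := by
  obtain ⟨n, hn⟩ := (toFinite {e | e ∉ Y ∧ e ≤ a}).exists_minimal ⟨a, ha, le_rfl⟩
  refine ⟨n, ⟨fun b hb => ?_, hn.prop.1⟩, hn.prop.2⟩
  by_contra hbY
  exact hb.not_ge (hn.le_of_le ⟨hbY, hb.le.trans hn.prop.2⟩ hb.le)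

lemma exists_outerFront_between (hE : IsForestOrder E) {Y : Set E} (hY : IsLowerSet Y) {y c : E}
    (hy : y ∈ Y) (hyc : y < c) (hc : c ∉ Y) : ∃ n ∈ outerFront Y, y < n ∧ n ≤ c := by
  obtain ⟨n, hn, hnc⟩ := exists_outerFront_le hc
  refine ⟨n, hn, ?_, hnc⟩
  rcases hE y n c hyc.le hnc with h | h
  · exact h.lt_of_ne fun h => hn.2 (h ▸ hy)
  · exact absurd (hY h hy) hn.2

lemma exists_outerFront_gt (hE : IsForestOrder E) {Y : Set E} (hY : IsLowerSet Y)
    (hmax : ∀ y ∈ Y, ¬ IsMax y) {y : E} (hy : y ∈ Y) : ∃ n ∈ outerFront Y, y < n := by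
  obtain ⟨m, hym, hm⟩ := (finite_univ (α := E)).exists_le_maximal (mem_univ y)
  have hm' : m ∉ Y := fun h => hmax m h fun b hb => hm.le_of_ge (mem_univ b) hb
  obtain ⟨n, hn, h, -⟩ := exists_outerFront_between hE hY hy
    (hym.lt_of_ne fun h => hm' (h ▸ hy)) hm'
  exact ⟨n, hn, h⟩

lemma exists_outerFront_gt_ne (hE : IsForestOrder E) (hB : IsBranchingOrder E) {Y : Set E}
    (hY : IsLowerSet Y) (hmax : ∀ y ∈ Y, ¬ IsMax y) {y n : E} (hy : y ∈ Y)
    (hyn : y < n) : ∃ m ∈ outerFront Y, y < m ∧ m ≠ n := by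
  obtain ⟨c, hyc, hnc, hcn⟩ := hB y n hyn
  by_cases hc : c ∈ Y
  · obtain ⟨m, hm, hcm⟩ := exists_outerFront_gt hE hY hmax hc
    exact ⟨m, hm, hyc.trans hcm, fun h => hcn (h ▸ hcm.le)⟩
  · obtain ⟨m, hm, hym, hmc⟩ := exists_outerFront_between hE hY hy hyc hc
    exact ⟨m, hm, hym, fun h => hnc (h ▸ hmc)⟩

lemma ncard_outerFront_lt (hE : IsForestOrder E) (hB : IsBranchingOrder E) {Y Z : Set E}
    (hY : IsLowerSet Y) (hmax : ∀ y ∈ Y, ¬ IsMax y) (hZY : Z ⊂ Y) :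
    (outerFront Z).ncard < (outerFront Y).ncard := by
  have key : ∀ n ∈ outerFront Z, ∃ m ∈ outerFront Y, n ≤ m := fun n hn => by
    by_cases hnY : n ∈ Y
    · obtain ⟨m, hm, h⟩ := exists_outerFront_gt hE hY hmax hnY
      exact ⟨m, hm, h.le⟩
    · exact ⟨n, ⟨fun a ha => hZY.1 (hn.1 a ha), hnY⟩, le_rfl⟩
  choose! g hg hle using key
  have hinj : ∀ m ∈ outerFront Z, ∀ n ∈ outerFront Z, m ≤ g n → m = n := fun m hm n hn h =>
    eq_of_mem_outerFront hm hn (hE m n _ h (hle n hn))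
  rw [← InjOn.ncard_image (f := g) (s := outerFront Z)
    fun m hm n hn h => hinj m hm n hn (h ▸ hle m hm)]
  refine ncard_lt_ncard ⟨image_subset_iff.2 hg, fun hsub => ?_⟩
  obtain ⟨y, hyY, hyZ⟩ := exists_of_ssubset hZY
  obtain ⟨n, hn, hny⟩ := exists_outerFront_le hyZ
  have hnY : n ∈ Y := hY hny hyY
  obtain ⟨m, hm, hnm, hne⟩ := exists_outerFront_gt_ne hE hB hY hmax hnY
    ((hle n hn).lt_of_ne fun h => (hg n hn).2 (h ▸ hnY))
  obtain ⟨k, hk, rfl⟩ := hsub hm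
  exact hne (by rw [hinj n hn k hk hnm.le])

end Cells

section Charts

variable {E : Type*} [PartialOrder E]

/-- The rooted sets ending in the interior of each of the edges growing out of `Y`. -/
def rootedChart (Y : Set E) : Set (rootedSets E) :=
  {f | ∀ n ∈ outerFront Y, 0 < f.1 n ∧ f.1 n < 1}

lemma isOpen_rootedChart [Finite E] (Y : Set E) : IsOpen (rootedChart Y) := by
  have : rootedChart Y = ⋂ n ∈ outerFront Y, {f : rootedSets E | 0 < f.1 n ∧ f.1 n < 1} := by
    ext f; simp [rootedChart]
  rw [this]
  refine (toFinite _).isOpen_biInter fun n _ => ?_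
  have hc : Continuous fun f : rootedSets E => f.1 n :=
    (continuous_apply n).comp continuous_subtype_val
  exact (isOpen_lt continuous_const hc).inter (isOpen_lt hc continuous_const)

open Classical in
/-- The function which is `1` on `Y`, is `g` on the outer front of `Y` and vanishes elsewhere. -/
noncomputable def extendFront (Y : Set E) (g : E → ℝ) (e : E) : ℝ :=
  if e ∈ Y then 1 else if e ∈ outerFront Y then g e else 0

lemma extendFront_of_mem {Y : Set E} (g : E → ℝ) {e : E} (he : e ∈ Y) : extendFront Y g e = 1 :=
  if_pos he

lemma extendFront_of_mem_outerFront {Y : Set E} (g : E → ℝ) {e : E} (he : e ∈ outerFront Y) :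
    extendFront Y g e = g e := by
  rw [extendFront, if_neg he.2, if_pos he]

lemma mem_of_extendFront_ne_zero {Y : Set E} {g : E → ℝ} {e : E} (he : extendFront Y g e ≠ 0) :
    e ∈ Y ∨ e ∈ outerFront Y := by
  by_contra! h
  exact he (by rw [extendFront, if_neg h.1, if_neg h.2])

lemma extendFront_mem_rootedCell {Y : Set E} (hY : IsLowerSet Y) {g : E → ℝ}
    (hg : ∀ e, 0 ≤ g e ∧ g e ≤ 1) : extendFront Y g ∈ rootedCell Y := by
  refine ⟨fun e => ?_, fun y hy => extendFront_of_mem g hy, fun a b hab hb => ?_⟩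
  · unfold extendFront
    split_ifs
    · exact ⟨zero_le_one, le_rfl⟩
    · exact hg e
    · exact ⟨le_rfl, zero_le_one⟩
  · rcases mem_of_extendFront_ne_zero hb with h | h
    · exact hY hab.le h
    · exact h.1 a hab

lemma eq_extendFront {Y : Set E} {f : E → ℝ} (hf : f ∈ rootedCell Y) : f = extendFront Y f := by
  ext e
  by_cases h : e ∈ Y
  · rw [hf.2.1 e h, extendFront_of_mem f h]
  by_cases h' : e ∈ outerFront Y
  · rw [extendFront_of_mem_outerFront f h']
  rw [extendFront, if_neg h, if_neg h']
  by_contra h0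
  exact h' ⟨fun a ha => hf.2.2 a e ha h0, h⟩

/-- The lower sets of non-maximal elements, seen as subsets of the whole order. -/
def innerSet (Y : LowerSet {e : E // ¬ IsMax e}) : Set E := Subtype.val '' (Y : Set {e // ¬ IsMax e})

lemma innerSet_subset {Y Z : LowerSet {e : E // ¬ IsMax e}} : innerSet Y ⊆ innerSet Z ↔ Y ≤ Z :=
  image_subset_image_iff Subtype.val_injective

lemma subset_closure_rootedChart {Y : Set E} (hY : IsLowerSet Y) {f : rootedSets E}
    (hf : f.1 ∈ rootedCell Y) : f ∈ closure (rootedChart Y) := by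
  have hmem : ∀ t : Icc (0 : ℝ) 1, ∀ e, 0 ≤ (1 - t.1) * f.1 e + t.1 / 2 ∧
      (1 - t.1) * f.1 e + t.1 / 2 ≤ 1 := fun t e => by
    obtain ⟨t, h0, h1⟩ := t
    obtain ⟨h2, h3⟩ := hf.1 e
    constructor <;> dsimp only <;> nlinarith [mul_nonneg (sub_nonneg.2 h1) h2,
      mul_nonneg (sub_nonneg.2 h1) (sub_nonneg.2 h3)]
  let F : Icc (0 : ℝ) 1 → rootedSets E := fun t =>
    ⟨extendFront Y fun e => (1 - t.1) * f.1 e + t.1 / 2,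
      rootedCell_subset_rootedSets (extendFront_mem_rootedCell hY (hmem t))⟩
  have hF : Continuous F := by
    refine Continuous.subtype_mk (continuous_pi fun e => ?_) _
    unfold extendFront
    split_ifs <;> fun_prop
  have h0 : F 0 = f := Subtype.ext (by
    conv_rhs => rw [eq_extendFront hf]
    simp [F])
  rw [← h0]
  have hcl : (0 : Icc (0 : ℝ) 1) ∈ closure (Ioi 0) := by
    rw [closure_Ioi' ⟨1, by simp⟩]; simp
  refine map_mem_closure hF hcl fun t ht n hn => ?_
  have ht : 0 < t.1 := ht
  obtain ⟨h2, h3⟩ := hf.1 n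
  simp only [F, extendFront_of_mem_outerFront _ hn]
  have := mul_nonneg (sub_nonneg.2 t.2.2) h2
  have := mul_nonneg (sub_nonneg.2 t.2.2) (sub_nonneg.2 h3)
  constructor <;> nlinarith

variable [Finite E]

lemma rootedChart_subset (hE : IsForestOrder E) {Y : Set E} (hY : IsLowerSet Y)
    (hmax : ∀ y ∈ Y, ¬ IsMax y) {f : rootedSets E} (hf : f ∈ rootedChart Y) :
    f.1 ∈ rootedCell Y := by
  refine ⟨f.2.1, fun y hy => ?_, fun a b hab hb => ?_⟩
  · obtain ⟨n, hn, hyn⟩ := exists_outerFront_gt hE hY hmax hy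
    exact (f.2.2 y n hyn).resolve_left (hf n hn).1.ne'
  · by_contra ha
    obtain ⟨n, hn, hna⟩ := exists_outerFront_le ha
    exact (hf n hn).2.ne ((f.2.2 n b (hna.trans_lt hab)).resolve_left hb)

/-- The open unit interval is homeomorphic to the line. -/
lemma nonempty_Ioo_homeomorph_real : Nonempty (Ioo (0 : ℝ) 1 ≃ₜ ℝ) := by
  have hpi := Real.pi_pos
  refine ⟨Homeomorph.trans ?_ Real.tanOrderIso.toHomeomorph⟩
  refine (affineHomeomorph Real.pi (-(Real.pi / 2)) hpi.ne').subtype fun x => ?_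
  simp only [mem_Ioo, affineHomeomorph_apply]
  constructor <;> rintro ⟨h1, h2⟩ <;> constructor <;> nlinarith

open Classical in
lemma nonempty_rootedChart_homeomorph (hE : IsForestOrder E) {Y : Set E} (hY : IsLowerSet Y)
    (hmax : ∀ y ∈ Y, ¬ IsMax y) :
    Nonempty (rootedChart Y ≃ₜ (Fin (outerFront Y).ncard → ℝ)) := by
  obtain ⟨φ⟩ := nonempty_Ioo_homeomorph_real
  let ext : (outerFront Y → Ioo (0 : ℝ) 1) → E → ℝ := fun g e =>
    if h : e ∈ outerFront Y then (g ⟨e, h⟩).1 else 0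
  have hext : ∀ g e, 0 ≤ ext g e ∧ ext g e ≤ 1 := fun g e => by
    by_cases h : e ∈ outerFront Y
    · simp only [ext, dif_pos h]
      exact ⟨(g ⟨e, h⟩).2.1.le, (g ⟨e, h⟩).2.2.le⟩
    · simp [ext, dif_neg h]
  have hextF : ∀ g (n : outerFront Y), extendFront Y (ext g) n = g n := fun g n => by
    rw [extendFront_of_mem_outerFront _ n.2]
    simp [ext]
  let ψ : rootedChart Y ≃ₜ (outerFront Y → Ioo (0 : ℝ) 1) :=
    { toFun := fun f n => ⟨f.1.1 n, f.2 n n.2⟩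
      invFun := fun g => ⟨⟨extendFront Y (ext g),
        rootedCell_subset_rootedSets (extendFront_mem_rootedCell hY (hext g))⟩,
        fun n hn => by
          have h : extendFront Y (ext g) n ∈ Ioo (0 : ℝ) 1 := hextF g ⟨n, hn⟩ ▸ (g ⟨n, hn⟩).2
          exact h⟩
      left_inv := fun f => by
        refine Subtype.ext (Subtype.ext ?_)
        conv_rhs => rw [eq_extendFront (rootedChart_subset hE hY hmax f.2)]
        ext e
        dsimp only
        unfold extendFront
        split_ifs with h h' <;> simp [ext, *]
      right_inv := fun g => by
        ext n
        exact hextF g n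
      continuous_toFun := continuous_pi fun n => Continuous.subtype_mk
        ((continuous_apply n.1).comp (continuous_subtype_val.comp continuous_subtype_val)) _
      continuous_invFun := by
        refine Continuous.subtype_mk (Continuous.subtype_mk (continuous_pi fun e => ?_) _) _
        unfold extendFront
        split_ifs with h h'
        · exact continuous_const
        · simp only [ext, dif_pos h']
          fun_prop
        · exact continuous_const }
  exact ⟨(ψ.trans (Homeomorph.piCongrRight fun _ => φ)).trans
    (Homeomorph.piCongrLeft (Y := fun _ => ℝ) (Finite.equivFin (outerFront Y)))⟩

end Charts

section Complex

variable {E : Type*} [PartialOrder E]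

lemma isLowerSet_innerSet (Y : LowerSet {e : E // ¬ IsMax e}) : IsLowerSet (innerSet Y) := by
  rintro a b hba ⟨⟨a, ha⟩, haY, rfl⟩
  exact ⟨⟨b, fun hb => ha (hb.mono hba)⟩, Y.lower hba haY, rfl⟩

lemma not_isMax_of_mem_innerSet (Y : LowerSet {e : E // ¬ IsMax e}) :
    ∀ y ∈ innerSet Y, ¬ IsMax y := by
  rintro _ ⟨y, -, rfl⟩
  exact y.2

lemma innerSet_inf (Y Z : LowerSet {e : E // ¬ IsMax e}) :
    innerSet (Y ⊓ Z) = innerSet Y ∩ innerSet Z :=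
  image_inter Subtype.val_injective

/-- The dimension of the cell of a lower set. -/
noncomputable def cellDim (Y : LowerSet {e : E // ¬ IsMax e}) : ℕ := (outerFront (innerSet Y)).ncard

/-- The cell of a lower set, inside the space of rooted sets. -/
def latticeCell (Y : LowerSet {e : E // ¬ IsMax e}) : Set (rootedSets E) :=
  {f | f.1 ∈ rootedCell (innerSet Y)}

lemma cellDim_strictMono [Finite E] (hE : IsForestOrder E) (hB : IsBranchingOrder E) :
    StrictMono (cellDim (E := E)) := fun _ Z h =>
  ncard_outerFront_lt hE hB (isLowerSet_innerSet Z) (not_isMax_of_mem_innerSet Z)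
    ⟨innerSet_subset.2 h.le, fun h' => h.not_ge (innerSet_subset.1 h')⟩

lemma mem_latticeCell_inf {Y Z : LowerSet {e : E // ¬ IsMax e}} {f : rootedSets E}
    (hY : f ∈ latticeCell Y) (hZ : f ∈ latticeCell Z) : f ∈ latticeCell (Y ⊓ Z) := by
  simp only [latticeCell, innerSet_inf]
  exact rootedCell_inter hY hZ

lemma exists_mem_latticeCell (f : rootedSets E) : ∃ Y, f ∈ latticeCell (E := E) Y := by
  let Y : LowerSet {e : E // ¬ IsMax e} :=
    ⟨{e | f.1 e = 1}, fun a b hba ha => by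
      rcases hba.eq_or_lt with h | h
      · exact h ▸ ha
      · refine (f.2.2 b a h).resolve_left ?_
        rw [show f.1 a = 1 from ha]
        exact one_ne_zero⟩
  refine ⟨Y, f.2.1, ?_, fun a b hab hb => ?_⟩
  · rintro _ ⟨y, hy, rfl⟩
    exact hy
  · exact ⟨⟨a, hab.not_isMax⟩, (f.2.2 a b hab).resolve_left hb, rfl⟩

theorem isCellComplex_latticeCell [Finite E] (hE : IsForestOrder E) (hB : IsBranchingOrder E) :
    IsCellComplex (latticeCell (E := E)) cellDim where
  isClosed Y := (isClosed_rootedCell _).preimage continuous_subtype_val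
  chart Y := by
    have hlow := isLowerSet_innerSet Y
    have hmax := not_isMax_of_mem_innerSet Y
    refine ⟨rootedChart (innerSet Y), isOpen_rootedChart _,
      nonempty_rootedChart_homeomorph hE hlow hmax, fun f hf => rootedChart_subset hE hlow hmax hf,
      fun f hf => subset_closure_rootedChart hlow hf, fun Z ⟨f, hfY, hfZ⟩ => ?_⟩
    refine le_antisymm (innerSet_subset.1 fun z hz => ?_) (innerSet_subset.1 fun y hy => ?_)
    · by_contra hzY
      obtain ⟨n, hn, hnz⟩ := exists_outerFront_le hzY
      exact (hfY n hn).2.ne (hfZ.2.1 n (isLowerSet_innerSet Z hnz hz))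
    · obtain ⟨n, hn, hyn⟩ := exists_outerFront_gt hE hlow hmax hy
      exact hfZ.2.2 y n hyn (hfY n hn).1.ne'
  cover := exists_mem_latticeCell
  separated Y Z f hY hZ hne := by
    have hmono := cellDim_strictMono hE hB
    have hinf := mem_latticeCell_inf hY hZ
    by_cases h : Y ⊓ Z = Y
    · have h' : Y ⊓ Z ≠ Z := fun h' => hne (h.symm.trans h')
      exact ⟨_, Z, hinf, hZ, (hmono (inf_le_right.lt_of_ne h')).ne⟩
    · exact ⟨_, Y, hinf, hY, (hmono (inf_le_left.lt_of_ne h)).ne⟩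

end Complex

section FiberCounting

lemma exists_equiv_comp_eq {A B L : Type*} [Finite A] [Finite B] (f : A → L) (g : B → L)
    (h : ∀ z, Nat.card {a // f a = z} = Nat.card {b // g b = z}) :
    ∃ e : A ≃ B, ∀ a, g (e a) = f a := by
  let e : ∀ z, {a // f a = z} ≃ {b // g b = z} := fun z => (Finite.card_eq.1 (h z)).some
  exact ⟨((Equiv.sigmaFiberEquiv f).symm.trans (Equiv.sigmaCongrRight e)).trans
    (Equiv.sigmaFiberEquiv g), fun a => (e (f a) ⟨a, rfl⟩).2⟩

open Classical in
lemma card_filter_le_eq_add {A L : Type*} [Fintype A] [Fintype L] [PartialOrder L] (f : A → L)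
    (z : L) : (Finset.univ.filter (f · ≤ z)).card = (Finset.univ.filter (f · = z)).card +
      ∑ w ∈ Finset.univ.filter (· < z), (Finset.univ.filter (f · = w)).card := by
  rw [Finset.card_eq_sum_card_fiberwise (f := f) (t := insert z (Finset.univ.filter (· < z)))
    (fun c hc => by simpa [← le_iff_eq_or_lt] using hc), Finset.sum_insert (by simp)]
  congr 1
  · congr 1; ext c; simp +contextual
  · refine Finset.sum_congr rfl fun w hw => ?_
    congr 1; ext c
    simp only [Finset.mem_filter, Finset.mem_univ, true_and, and_iff_right_iff_imp] at hw ⊢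
    rintro rfl
    exact hw.le

lemma card_fiber_eq_of_card_le_eq {A B L : Type*} [Finite A] [Finite B] [Finite L] [PartialOrder L]
    (f : A → L) (g : B → L)
    (h : ∀ z, Nat.card {a // f a ≤ z} = Nat.card {b // g b ≤ z}) (z : L) :
    Nat.card {a // f a = z} = Nat.card {b // g b = z} := by
  classical
  have := Fintype.ofFinite A
  have := Fintype.ofFinite B
  have := Fintype.ofFinite L
  simp only [Nat.card_eq_fintype_card, Fintype.card_subtype] at h ⊢
  induction z using WellFoundedLT.induction with
  | ind z ih =>
    have h1 := h z
    have hf := card_filter_le_eq_add f z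
    have hg := card_filter_le_eq_add g z
    rw [Finset.sum_congr rfl fun w hw => ih w (by simpa using hw)] at hf
    have h2 := hf.symm.trans (Eq.trans (by convert h1) hg)
    convert Nat.add_right_cancel h2

end FiberCounting

lemma SupIrred.map_orderIso {α β : Type*} [SemilatticeSup α] [SemilatticeSup β] {a : α}
    (ha : SupIrred a) (Φ : α ≃o β) : SupIrred (Φ a) := by
  refine ⟨fun h => ha.1 (Φ.isMin_apply.1 h), fun b c hbc => ?_⟩
  have := @ha.2 (Φ.symm b) (Φ.symm c) (by rw [← map_sup, hbc, Φ.symm_apply_apply])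
  simpa only [OrderIso.symm_apply_eq] using this

/-- An isomorphism between lattices of lower sets is induced by one of the underlying orders. -/
lemma OrderIso.exists_of_lowerSet {P Q : Type*} [PartialOrder P] [PartialOrder Q] [Finite P]
    [Finite Q] (Φ : LowerSet P ≃o LowerSet Q) :
    ∃ ψ : P ≃o Q, ∀ Y v, ψ v ∈ Φ Y ↔ v ∈ Y := by
  have h1 : ∀ v, ∃ w, LowerSet.Iic w = Φ (LowerSet.Iic v) := fun v =>
    LowerSet.supIrred_iff_of_finite.1
      ((LowerSet.supIrred_Iic v).map_orderIso Φ)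
  have h2 : ∀ w, ∃ v, LowerSet.Iic v = Φ.symm (LowerSet.Iic w) := fun w =>
    LowerSet.supIrred_iff_of_finite.1
      ((LowerSet.supIrred_Iic w).map_orderIso Φ.symm)
  choose ψ hψ using h1
  choose χ hχ using h2
  refine ⟨⟨⟨ψ, χ, fun v => ?_, fun w => ?_⟩, fun {a b} => ?_⟩, fun Y v => ?_⟩
  · refine LowerSet.Iic_injective ?_
    rw [hχ, hψ, Φ.symm_apply_apply]
  · refine LowerSet.Iic_injective ?_
    rw [hψ, hχ, Φ.apply_symm_apply]
  · change ψ a ≤ ψ b ↔ a ≤ b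
    rw [← LowerSet.mem_Iic_iff, ← LowerSet.Iic_le, hψ, hψ, Φ.le_iff_le, LowerSet.Iic_le,
      LowerSet.mem_Iic_iff]
  · change ψ v ∈ Φ Y ↔ v ∈ Y
    rw [← LowerSet.Iic_le, hψ, Φ.le_iff_le, LowerSet.Iic_le]

section Rigidity

variable {E F : Type*} [PartialOrder E] [PartialOrder F]

/-- Neighbouring lower sets have cells sharing a point lying in no other cell. -/
lemma CovBy.exists_mem_latticeCell_iff [Finite E] (hE : IsForestOrder E)
    {Y Y' : LowerSet {e : E // ¬ IsMax e}} (h : Y ⋖ Y') :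
    ∃ f : rootedSets E, ∀ Z, f ∈ latticeCell Z ↔ Z = Y ∨ Z = Y' := by
  classical
  have hsub : innerSet Y ⊆ innerSet Y' := innerSet_subset.2 h.le
  let f : E → ℝ := fun e =>
    if e ∈ innerSet Y' then 1 else if e ∈ outerFront (innerSet Y) then 1 / 2 else 0
  have hf1 : ∀ e, f e = 1 ↔ e ∈ innerSet Y' := fun e => by
    simp only [f]
    split_ifs <;> norm_num [*]
  have hf0 : ∀ e, f e ≠ 0 ↔ e ∈ innerSet Y' ∨ e ∈ outerFront (innerSet Y) := fun e => by
    simp only [f]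
    split_ifs <;> norm_num [*]
  have hpred : ∀ a b, a < b → b ∈ innerSet Y' → a ∈ innerSet Y := fun a b hab hb => by
    by_contra ha
    have haY' := isLowerSet_innerSet Y' hab.le hb
    obtain ⟨⟨a, ha'⟩, haY', rfl⟩ := haY'
    obtain ⟨⟨b, hb'⟩, hbY', rfl⟩ := hb
    rcases h.eq_or_eq (c := Y ⊔ LowerSet.Iic ⟨a, ha'⟩) le_sup_left
      (sup_le h.le (LowerSet.Iic_le.2 haY')) with h' | h'
    · exact ha ⟨⟨a, ha'⟩, LowerSet.Iic_le.1 (sup_eq_left.1 h'), rfl⟩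
    · rw [← h', SetLike.mem_coe, LowerSet.mem_sup_iff] at hbY'
      rcases hbY' with hbY | hba
      · exact ha (isLowerSet_innerSet Y hab.le ⟨_, hbY, rfl⟩)
      · exact hab.not_ge (LowerSet.mem_Iic_iff.1 hba)
  have hfY : f ∈ rootedCell (innerSet Y) := by
    refine ⟨fun e => ?_, fun y hy => (hf1 y).2 (hsub hy), fun a b hab hb => ?_⟩
    · simp only [f]
      split_ifs <;> norm_num
    · exact ((hf0 b).1 hb).elim (hpred a b hab) fun hb => hb.1 a hab
  refine ⟨⟨f, rootedCell_subset_rootedSets hfY⟩, fun Z => ⟨fun hZ => ?_, ?_⟩⟩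
  · refine h.eq_or_eq (innerSet_subset.1 fun y hy => ?_)
      (innerSet_subset.1 fun z hz => (hf1 z).1 (hZ.2.1 z hz))
    obtain ⟨n, hn, hyn⟩ := exists_outerFront_gt hE (isLowerSet_innerSet Y)
      (not_isMax_of_mem_innerSet Y) hy
    exact hZ.2.2 y n hyn ((hf0 n).2 (Or.inr hn))
  · rintro (rfl | rfl)
    · exact hfY
    · exact ⟨hfY.1, fun y hy => (hf1 y).2 hy, fun a b hab hb => hsub (hfY.2.2 a b hab hb)⟩

lemma lt_of_covBy [Finite E] [Finite F] (hE : IsForestOrder E) (hEB : IsBranchingOrder E)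
    (hF : IsForestOrder F) (hFB : IsBranchingOrder F)
    (h : rootedSets E ≃ₜ rootedSets F)
    (φ : LowerSet {e : E // ¬ IsMax e} ≃ LowerSet {e : F // ¬ IsMax e})
    (hφ : ∀ Y, cellDim (φ Y) = cellDim Y ∧ h '' latticeCell Y = latticeCell (φ Y))
    {Y Y' : LowerSet {e : E // ¬ IsMax e}} (hc : Y ⋖ Y') : φ Y < φ Y' := by
  obtain ⟨f, hf⟩ := hc.exists_mem_latticeCell_iff hE
  have hhf : ∀ Z, h f ∈ latticeCell (φ Z) ↔ Z = Y ∨ Z = Y' := fun Z => by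
    rw [← (hφ Z).2, h.injective.mem_set_image, hf]
  have hdim : cellDim (φ Y) < cellDim (φ Y') := by
    rw [(hφ Y).1, (hφ Y').1]
    exact cellDim_strictMono hE hEB hc.lt
  have hinf := mem_latticeCell_inf ((hhf Y).2 (Or.inl rfl)) ((hhf Y').2 (Or.inr rfl))
  rw [← φ.apply_symm_apply (φ Y ⊓ φ Y'), hhf, φ.symm_apply_eq, φ.symm_apply_eq] at hinf
  rcases hinf with hinf | hinf
  · exact (inf_eq_left.1 hinf).lt_of_ne fun h => hdim.ne (by rw [h])
  · exact absurd (cellDim_strictMono hF hFB |>.monotone (inf_eq_right.1 hinf)) hdim.not_ge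

/-- The elements strictly below `e`, as a lower set of non-maximal elements. -/
def lowerPart (e : E) : LowerSet {e : E // ¬ IsMax e} :=
  ⟨{v | v.1 < e}, fun _ _ hba ha => lt_of_le_of_lt (Subtype.coe_le_coe.2 hba) ha⟩

lemma mem_lowerPart {e : E} {v : {e : E // ¬ IsMax e}} : v ∈ lowerPart e ↔ v.1 < e := Iff.rfl

lemma lowerPart_le_iff {e : E} {Y : LowerSet {e : E // ¬ IsMax e}} :
    lowerPart e ≤ Y ↔ e ∈ innerSet Y ∪ outerFront (innerSet Y) := by
  have h : lowerPart e ≤ Y ↔ ∀ a < e, a ∈ innerSet Y :=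
    ⟨fun h a ha => ⟨⟨a, ha.not_isMax⟩, h ha, rfl⟩, fun h a ha => by
      obtain ⟨a', ha', hh⟩ := h a.1 ha
      exact Subtype.ext hh ▸ ha'⟩
  rw [h]
  refine ⟨fun h => ?_, ?_⟩
  · by_cases he : e ∈ innerSet Y
    · exact Or.inl he
    · exact Or.inr ⟨h, he⟩
  · rintro (he | he) a ha
    · exact isLowerSet_innerSet Y ha.le he
    · exact he.1 a ha

lemma card_lowerPart_le [Finite E] (Y : LowerSet {e : E // ¬ IsMax e}) :
    Nat.card {e : E // lowerPart e ≤ Y} = (Y : Set {e : E // ¬ IsMax e}).ncard + cellDim Y := by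
  have h : Nat.card {e : E // lowerPart e ≤ Y} =
      (innerSet Y ∪ outerFront (innerSet Y)).ncard :=
    Nat.card_congr (Equiv.subtypeEquivRight fun _ => lowerPart_le_iff)
  rw [h, ncard_union_eq (disjoint_left.2 fun _ h h' => h'.2 h), innerSet,
    ncard_image_of_injective _ Subtype.val_injective]
  rfl

lemma card_subtype_eq_add {G : Type*} [Finite G] (p q : G → Prop) : Nat.card {e // q e} =
    Nat.card {v : {e // p e} // q v.1} + Nat.card {v : {e // ¬ p e} // q v.1} := by
  classical
  have := Fintype.ofFinite G
  rw [Nat.card_congr (Equiv.subtypeSubtypeEquivSubtypeInter p q),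
    Nat.card_congr (Equiv.subtypeSubtypeEquivSubtypeInter (fun e => ¬ p e) q)]
  simp only [Nat.card_eq_fintype_card, Fintype.card_subtype]
  rw [← Finset.card_filter_add_card_filter_not (s := Finset.univ.filter q) p,
    Finset.filter_filter, Finset.filter_filter]
  simp only [and_comm]

/-- A forest can be recovered from the isomorphism type of the lattice of lower sets of
non-maximal elements together with the dimension function. -/
lemma exists_orderIso_of_cellDim [Finite E] [Finite F]
    (Φ : LowerSet {e : E // ¬ IsMax e} ≃o LowerSet {e : F // ¬ IsMax e})
    (hΦ : ∀ Y, cellDim (Φ Y) = cellDim Y) : Nonempty (E ≃o F) := by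
  classical
  obtain ⟨ψ, hψ⟩ := Φ.exists_of_lowerSet
  have hψD : ∀ v, lowerPart (ψ v).1 = Φ (lowerPart v.1) := fun v => by
    ext w
    obtain ⟨w, rfl⟩ := ψ.surjective w
    have := ψ.lt_iff_lt (x := w) (y := v)
    simp only [SetLike.mem_coe, hψ, mem_lowerPart, Subtype.coe_lt_coe, this]
  have hle : ∀ Y, Nat.card {e : E // Φ (lowerPart e) ≤ Y} = Nat.card {e : F // lowerPart e ≤ Y} :=
    fun Y => by
      obtain ⟨Y, rfl⟩ := Φ.surjective Y
      simp only [Φ.le_iff_le]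
      rw [card_lowerPart_le, card_lowerPart_le, hΦ]
      have : (Φ Y : Set _) = ψ '' (Y : Set {e : E // ¬ IsMax e}) := by
        ext w
        obtain ⟨w, rfl⟩ := ψ.surjective w
        simp [hψ]
      rw [this, ncard_image_of_injective _ ψ.injective]
  have hfib := card_fiber_eq_of_card_le_eq _ _ hle
  have hinner : ∀ Y, Nat.card {v : {e : E // ¬ IsMax e} // Φ (lowerPart v.1) = Y} =
      Nat.card {v : {e : F // ¬ IsMax e} // lowerPart v.1 = Y} := fun Y =>
    Nat.card_congr (ψ.toEquiv.subtypeEquiv fun v => by rw [← hψD]; rfl)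
  have hleaf : ∀ Y, Nat.card {v : {e : E // IsMax e} // Φ (lowerPart v.1) = Y} =
      Nat.card {v : {e : F // IsMax e} // lowerPart v.1 = Y} := fun Y => by
    have h1 := card_subtype_eq_add IsMax fun e : E => Φ (lowerPart e) = Y
    have h2 := card_subtype_eq_add IsMax fun e : F => lowerPart e = Y
    have h3 := hfib Y
    have h4 := hinner Y
    omega
  obtain ⟨χ, hχ⟩ := exists_equiv_comp_eq _ _ hleaf
  let ω : E ≃ F := (Equiv.sumCompl IsMax).symm.trans
    ((Equiv.sumCongr χ ψ.toEquiv).trans (Equiv.sumCompl IsMax))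
  have hωmax : ∀ v : {e : E // IsMax e}, ω v = χ v := fun v => by
    simp [ω, Equiv.sumCompl_symm_apply_of_pos v.2]
  have hωinner : ∀ v : {e : E // ¬ IsMax e}, ω v = ψ v := fun v => by
    simp [ω, Equiv.sumCompl_symm_apply_of_neg v.2]
  have hω : ∀ e, lowerPart (ω e) = Φ (lowerPart e) := fun e => by
    by_cases he : IsMax e
    · rw [hωmax ⟨e, he⟩, hχ]
    · rw [hωinner ⟨e, he⟩, hψD]
  have hlt : ∀ a b, ω a < ω b ↔ a < b := fun a b => by
    by_cases ha : IsMax a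
    · rw [hωmax ⟨a, ha⟩]
      exact iff_of_false (χ ⟨a, ha⟩).2.not_lt ha.not_lt
    · rw [hωinner ⟨a, ha⟩, ← mem_lowerPart, hω, hψ]
      rfl
  exact ⟨ω, fun {a b} => by rw [le_iff_eq_or_lt, le_iff_eq_or_lt, ω.injective.eq_iff, hlt]⟩

/-- The space of rooted sets determines a branching forest. -/
theorem exists_orderIso_of_homeomorph [Finite E] [Finite F] (hE : IsForestOrder E)
    (hEB : IsBranchingOrder E) (hF : IsForestOrder F) (hFB : IsBranchingOrder F)
    (h : rootedSets E ≃ₜ rootedSets F) : Nonempty (E ≃o F) := by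
  obtain ⟨φ, hφ⟩ := (isCellComplex_latticeCell hE hEB).exists_equiv
    (isCellComplex_latticeCell hF hFB) h
  have hφ' : ∀ Z, cellDim (φ.symm Z) = cellDim Z ∧
      h.symm '' latticeCell Z = latticeCell (φ.symm Z) := fun Z => by
    obtain ⟨Y, rfl⟩ := φ.surjective Z
    rw [φ.symm_apply_apply, (hφ Y).1, ← (hφ Y).2, ← image_comp]
    simp
  have := Fintype.ofFinite (LowerSet {e : E // ¬ IsMax e})
  have := Fintype.ofFinite (LowerSet {e : F // ¬ IsMax e})
  classical
  have hmono : Monotone φ := by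
    let := Fintype.toLocallyFiniteOrder (α := LowerSet {e : E // ¬ IsMax e})
    exact (monotone_iff_forall_covBy φ).2 fun Y Y' hc => (lt_of_covBy hE hEB hF hFB h φ hφ hc).le
  have hmono' : Monotone φ.symm := by
    let := Fintype.toLocallyFiniteOrder (α := LowerSet {e : F // ¬ IsMax e})
    exact (monotone_iff_forall_covBy φ.symm).2 fun Y Y' hc =>
      (lt_of_covBy hF hFB hE hEB h.symm φ.symm hφ' hc).le
  exact exists_orderIso_of_cellDim (φ.toOrderIso hmono hmono') fun Y => (hφ Y).1

end Rigidity

/-- The tree obtained by gluing the edges of a rooted forest at a root: its points are the rooted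
sets that are arcs from the root. -/
def forestTree (E : Type*) [PartialOrder E] : Set (E → ℝ) :=
  {f | f ∈ rootedSets E ∧ ∀ a b, f a ≠ 0 → f b ≠ 0 → a ≤ b ∨ b ≤ a}

section ForestTree

variable {E : Type*} [PartialOrder E]

lemma isClosed_rootedSets : IsClosed (rootedSets E) := by
  have : rootedSets E = (⋂ e, {f : E → ℝ | 0 ≤ f e ∧ f e ≤ 1}) ∩
      ⋂ a, ⋂ b, ⋂ (_ : a < b), ({f | f b = 0} ∪ {f | f a = 1}) := by
    ext f; simp [rootedSets]
  rw [this]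
  refine (isClosed_iInter fun e => ?_).inter
    (isClosed_iInter fun a => isClosed_iInter fun b => isClosed_iInter fun _ => ?_)
  · exact (isClosed_le continuous_const (continuous_apply e)).inter
      (isClosed_le (continuous_apply e) continuous_const)
  · exact (isClosed_eq (continuous_apply b) continuous_const).union
      (isClosed_eq (continuous_apply a) continuous_const)

lemma isCompact_rootedSets : IsCompact (rootedSets E) :=
  (isCompact_univ_pi fun _ : E => isCompact_Icc (a := (0 : ℝ)) (b := 1)).of_isClosed_subset
    isClosed_rootedSets fun _ hf e _ => hf.1 e

lemma isCompact_forestTree : IsCompact (forestTree E) := by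
  have : forestTree E = rootedSets E ∩ ⋂ a, ⋂ b, ⋂ (_ : ¬ (a ≤ b ∨ b ≤ a)),
      ({f | f a = 0} ∪ {f | f b = 0}) := by
    ext f
    simp only [forestTree, mem_inter_iff, mem_iInter, mem_union, mem_ofPred]
    refine and_congr_right fun _ => forall₂_congr fun a b => ?_
    tauto
  rw [this]
  exact isCompact_rootedSets.inter_right (isClosed_iInter fun a => isClosed_iInter fun b =>
    isClosed_iInter fun _ => (isClosed_eq (continuous_apply a) continuous_const).union
      (isClosed_eq (continuous_apply b) continuous_const))

instance : CompactSpace (rootedSets E) := isCompact_iff_compactSpace.1 isCompact_rootedSets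

instance : CompactSpace (forestTree E) := isCompact_iff_compactSpace.1 isCompact_forestTree

lemma zero_mem_forestTree : (0 : E → ℝ) ∈ forestTree E :=
  ⟨⟨fun _ => ⟨le_rfl, zero_le_one⟩, fun _ _ _ => Or.inl rfl⟩, fun _ _ h => (h rfl).elim⟩

instance : Zero (forestTree E) := ⟨⟨0, zero_mem_forestTree⟩⟩

lemma forestTree_zero_apply (e : E) : (0 : forestTree E).1 e = 0 := rfl

/-- The part of a point of the tree that is contained in a given rooted set. -/
noncomputable def truncate (g : rootedSets E) (x : forestTree E) : forestTree E :=
  ⟨fun e => min (x.1 e) (g.1 e), ⟨fun e => ⟨le_min (x.2.1.1 e).1 (g.2.1 e).1,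
    (min_le_left _ _).trans (x.2.1.1 e).2⟩, fun a b hab => by
      beta_reduce
      rcases x.2.1.2 a b hab with h | h
      · left; rw [h]; exact min_eq_left (g.2.1 b).1
      rcases g.2.2 a b hab with h' | h'
      · left; rw [h']; exact min_eq_right (x.2.1.1 b).1
      · right; rw [h, h', min_self]⟩, fun a b ha hb =>
      x.2.2 a b (fun h => ha ((congrArg (min · _) h).trans (min_eq_left (g.2.1 a).1)))
        fun h => hb ((congrArg (min · _) h).trans (min_eq_left (g.2.1 b).1))⟩

lemma continuous_truncate :
    Continuous fun z : rootedSets E × forestTree E => truncate z.1 z.2 := by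
  refine Continuous.subtype_mk (continuous_pi fun e => ?_) _
  exact ((continuous_apply e).comp (continuous_subtype_val.comp continuous_snd)).min
    ((continuous_apply e).comp (continuous_subtype_val.comp continuous_fst))

lemma mem_range_truncate {g : rootedSets E} {x : forestTree E} :
    x ∈ range (truncate g) ↔ ∀ e, x.1 e ≤ g.1 e := by
  refine ⟨?_, fun h => ⟨x, Subtype.ext (funext fun e => min_eq_left (h e))⟩⟩
  rintro ⟨x, rfl⟩ e
  exact min_le_right _ _

/-- The rooted set consisting of the points at height at most `t`. -/
noncomputable def heightSet [Finite E] (t : ℝ) : rootedSets E :=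
  ⟨fun e => max 0 (min 1 (t - (Iio e).ncard)), fun e => ⟨le_max_left _ _,
    max_le zero_le_one (min_le_left _ _)⟩, fun a b hab => by
      have h : ((Iio a).ncard : ℝ) + 1 ≤ (Iio b).ncard := by
        exact_mod_cast Nat.succ_le_of_lt (ncard_lt_ncard (Iio_ssubset_Iio hab))
      rcases le_or_gt t (Iio b).ncard with hb | hb
      · left
        exact max_eq_left ((min_le_right _ _).trans (by linarith))
      · right
        beta_reduce
        rw [min_eq_left (by linarith), max_eq_right zero_le_one]⟩

lemma continuous_heightSet [Finite E] : Continuous (heightSet : ℝ → rootedSets E) :=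
  Continuous.subtype_mk (continuous_pi fun e => by fun_prop) _

lemma isConnected_range_truncate [Finite E] (g : rootedSets E) :
    IsConnected (range (truncate g)) := by
  refine ⟨⟨_, 0, rfl⟩, isPreconnected_of_forall 0 ?_⟩
  rintro x hx
  have hc : Continuous fun t : ℝ => truncate (heightSet t) x :=
    continuous_truncate.comp (continuous_heightSet.prodMk continuous_const)
  refine ⟨range fun t : ℝ => truncate (heightSet t) x, ?_, ⟨0, ?_⟩, ⟨Nat.card E, ?_⟩,
    isPreconnected_range hc⟩
  · rintro _ ⟨t, rfl⟩
    exact mem_range_truncate.2 fun e => (min_le_left _ _).trans (mem_range_truncate.1 hx e)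
  · refine Subtype.ext (funext fun e => ?_)
    refine (min_eq_right ?_).trans ?_
    · exact (max_eq_left ((min_le_right _ _).trans (by simp))).trans_le (x.2.1.1 e).1
    · exact (max_eq_left ((min_le_right _ _).trans (by simp)))
  · refine Subtype.ext (funext fun e => min_eq_left ((x.2.1.1 e).2.trans (le_max_of_le_right ?_)))
    refine le_min le_rfl ?_
    have h : (Iio e).ncard < Nat.card E := by
      rw [← ncard_univ]
      exact ncard_lt_ncard (ssubset_univ_iff.2 fun h => lt_irrefl e (h ▸ mem_univ e : e ∈ Iio e))
    have : ((Iio e).ncard : ℝ) + 1 ≤ Nat.card E := by exact_mod_cast h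
    linarith

lemma IsForestOrder.exists_mem_range_truncate (hE : IsForestOrder E) (g : rootedSets E) (e : E) :
    ∃ x ∈ range (truncate g), x.1 e = g.1 e := by
  classical
  let x : E → ℝ := fun a => if a ≤ e then g.1 a else 0
  have hle : ∀ a, x a ≠ 0 → a ≤ e := fun a ha => by
    by_contra h
    exact ha (if_neg h)
  have hx : x ∈ forestTree E := by
    refine ⟨⟨fun a => ?_, fun a b hab => ?_⟩, fun a b ha hb => hE a b e (hle a ha) (hle b hb)⟩
    · simp only [x]
      split_ifs
      · exact g.2.1 a
      · exact ⟨le_rfl, zero_le_one⟩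
    · by_cases hb : b ≤ e
      · simpa only [x, if_pos hb, if_pos (hab.le.trans hb)] using g.2.2 a b hab
      · exact Or.inl (if_neg hb)
  refine ⟨⟨x, hx⟩, mem_range_truncate.2 fun a => ?_, if_pos le_rfl⟩
  simp only [x]
  split_ifs
  · exact le_rfl
  · exact (g.2.1 a).1

lemma IsForestOrder.le_of_range_truncate_subset (hE : IsForestOrder E) {g g' : rootedSets E}
    (h : range (truncate g) ⊆ range (truncate g')) (e : E) : g.1 e ≤ g'.1 e := by
  obtain ⟨x, hx, hxe⟩ := hE.exists_mem_range_truncate g e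
  exact hxe ▸ mem_range_truncate.1 (h hx) e

/-- The amount of the subtree starting with the edge `e` that lies between the root and a point. -/
noncomputable def heightAbove [Fintype E] (e : E) (x : forestTree E) : ℝ :=
  open Classical in ∑ c ∈ Finset.univ.filter (e ≤ ·), x.1 c

lemma continuous_heightAbove [Fintype E] (e : E) : Continuous (heightAbove e) :=
  continuous_finsetSum _ fun c _ => (continuous_apply c).comp continuous_subtype_val

lemma le_heightAbove [Fintype E] {e c : E} (hc : e ≤ c) (x : forestTree E) :
    x.1 c ≤ heightAbove e x :=
  Finset.single_le_sum (f := x.1) (fun a _ => (x.2.1.1 a).1) (by simpa using hc)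

lemma add_le_heightAbove [Fintype E] {e c : E} (hc : e < c) (x : forestTree E) :
    x.1 e + x.1 c ≤ heightAbove e x := by
  classical
  rw [← Finset.sum_pair (f := x.1) hc.ne]
  refine Finset.sum_le_sum_of_subset_of_nonneg ?_ fun a _ _ => (x.2.1.1 a).1
  intro a
  simp only [Finset.mem_insert, Finset.mem_singleton, Finset.mem_filter, Finset.mem_univ, true_and]
  rintro (rfl | rfl)
  exacts [le_rfl, hc.le]

/-- A point of the tree is determined by its last edge and its position on this edge. -/
lemma eq_of_heightAbove_eq [Fintype E] {x z : forestTree E} {e : E} (he : x.1 e ≠ 0)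
    (htop : ∀ c, e < c → x.1 c = 0) (h : heightAbove e z = x.1 e) : z = x := by
  have hx0 : 0 < x.1 e := (x.2.1.1 e).1.lt_of_ne' he
  have hex : ∃ c, e ≤ c ∧ z.1 c ≠ 0 := by
    by_contra! hc
    refine he (h ▸ Finset.sum_eq_zero fun c hc' => hc c (by simpa using hc'))
  have hze : z.1 e ≠ 0 := by
    obtain ⟨c, hec, hc⟩ := hex
    rcases hec.eq_or_lt with rfl | hec
    · exact hc
    · rw [(z.2.1.2 e c hec).resolve_left hc]
      exact one_ne_zero
  have hztop : ∀ c, e < c → z.1 c = 0 := fun c hec => by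
    by_contra hc
    have h1 := add_le_heightAbove hec z
    rw [(z.2.1.2 e c hec).resolve_left hc, h] at h1
    have := (z.2.1.1 c).1.lt_of_ne' hc
    linarith [(x.2.1.1 e).2]
  have hval : z.1 e = x.1 e := by
    rw [← h, heightAbove, Finset.sum_eq_single e]
    · intro c hc hce
      exact hztop c (lt_of_le_of_ne (by simpa using hc) hce.symm)
    · simp
  refine Subtype.ext (funext fun c => ?_)
  by_cases hce : c ≤ e
  · rcases hce.eq_or_lt with rfl | hce
    · exact hval
    · rw [(z.2.1.2 c e hce).resolve_left hze, (x.2.1.2 c e hce).resolve_left he]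
  by_cases hec : e ≤ c
  · have := hec.lt_of_not_ge hce
    rw [hztop c this, htop c this]
  · have key : ∀ y : forestTree E, y.1 e ≠ 0 → y.1 c = 0 := fun y hy => by
      by_contra hc
      exact (y.2.2 c e hc hy).elim hce hec
    rw [key z hze, key x he]

/-- Every subcontinuum of the tree containing the root comes from a rooted set. -/
lemma exists_range_truncate_eq [Finite E] {A : Set (forestTree E)} (hA : IsCompact A)
    (hconn : IsPreconnected A) (h0 : 0 ∈ A) : ∃ g, range (truncate g) = A := by
  have := Fintype.ofFinite E
  have hmax : ∀ e, ∃ a ∈ A, ∀ x ∈ A, x.1 e ≤ a.1 e := fun e =>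
    hA.exists_isMaxOn ⟨0, h0⟩ ((continuous_apply e).comp continuous_subtype_val).continuousOn
  choose a haA ha using hmax
  let g : rootedSets E := ⟨fun e => (a e).1 e, fun e => (a e).2.1.1 e, fun b c hbc => by
    refine or_iff_not_imp_left.2 fun hc => le_antisymm ((a b).2.1.1 b).2 ?_
    rw [← ((a c).2.1.2 b c hbc).resolve_left hc]
    exact ha b _ (haA c)⟩
  refine ⟨g, Subset.antisymm (fun x hx => ?_)
    fun x hx => mem_range_truncate.2 fun e => ha e x hx⟩
  rw [mem_range_truncate] at hx
  by_cases hx0 : x = 0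
  · exact hx0 ▸ h0
  have hne : {e | x.1 e ≠ 0}.Nonempty := by
    by_contra! hempty
    refine hx0 (Subtype.ext (funext fun e => ?_))
    by_contra he
    exact (hempty ▸ he : e ∈ (∅ : Set E))
  obtain ⟨e, he⟩ := (toFinite {e | x.1 e ≠ 0}).exists_maximal hne
  have htop : ∀ c, e < c → x.1 c = 0 := fun c hec => by
    by_contra hc
    exact hec.not_ge (he.le_of_ge hc hec.le)
  have hIcc : x.1 e ∈ Icc (heightAbove e 0) (heightAbove e (a e)) :=
    ⟨(Finset.sum_eq_zero fun c _ => rfl).trans_le (x.2.1.1 e).1,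
      (hx e).trans (le_heightAbove le_rfl (a e))⟩
  obtain ⟨z, hz, hze⟩ := hconn.intermediate_value h0 (haA e)
    (continuous_heightAbove e).continuousOn hIcc
  exact eq_of_heightAbove_eq he.prop htop hze ▸ hz

variable {X : Type*} [MetricSpace X]

/-- The hyperspace of subcontinua of a tree containing the root is the space of rooted sets. -/
theorem nonempty_homeomorph_CP [Finite E] (hE : IsForestOrder E) (J : forestTree E ≃ₜ X) {p : X}
    (hp : J 0 = p) : Nonempty (rootedSets E ≃ₜ CP X p) := by
  let G : rootedSets E → CP X p := fun g =>
    ⟨(⊤ : NonemptyCompacts (forestTree E)).map (fun x => J (truncate g x))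
      (J.continuous.comp (continuous_truncate.comp (.prodMk_right g))), by
      have h : (⊤ : NonemptyCompacts (forestTree E)).map (fun x => J (truncate g x))
          (J.continuous.comp (continuous_truncate.comp (.prodMk_right g))) =
          J '' range (truncate g) := by
        simp [← range_comp, Function.comp_def]
      rw [h]
      exact ⟨(isConnected_range_truncate g).image J J.continuous.continuousOn, hp ▸
        mem_image_of_mem J (mem_range_truncate.2 fun e => (g.2.1 e).1)⟩⟩
  have hG : ∀ g, ((G g).1 : Set X) = J '' range (truncate g) := fun g => by
    simp [G, ← range_comp, Function.comp_def]
  have hcont : Continuous G := Continuous.subtype_mk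
    (Continuous.nonemptyCompacts_map' (g := fun g x => J (truncate g x)) continuous_const
      (J.continuous.comp continuous_truncate)) _
  have hinj : Function.Injective G := fun g g' h => by
    have h' : range (truncate g) = range (truncate g') := by
      rw [← image_eq_image J.injective, ← hG, ← hG, h]
    exact Subtype.ext (funext fun e => le_antisymm (hE.le_of_range_truncate_subset h'.subset e)
      (hE.le_of_range_truncate_subset h'.superset e))
  have hsurj : Function.Surjective G := fun A => by
    obtain ⟨g, hg⟩ := exists_range_truncate_eq (A := J ⁻¹' A.1)
      (J.isCompact_preimage.2 A.1.isCompact) (J.isPreconnected_preimage.2 A.2.1.2)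
      (by rw [mem_preimage, hp]; exact A.2.2)
    refine ⟨g, Subtype.ext (SetLike.coe_injective ?_)⟩
    rw [hG, hg, image_preimage_eq _ J.surjective]
  exact ⟨hcont.homeoOfEquivCompactToT2 (f := Equiv.ofBijective G ⟨hinj, hsurj⟩)⟩

end ForestTree

section Merge

variable {E : Type*}

open Classical in
/-- Merging the edge `b` into the edge `a`. -/
noncomputable def mergeEdge (a b : E) (x : E → ℝ) (e : {e // e ≠ b}) : ℝ :=
  if e.1 = a then (x a + x b) / 2 else x e.1

open Classical in
/-- Subdividing the edge `a` into two edges, `a` followed by `b`. -/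
noncomputable def splitEdge {a b : E} (hab : a ≠ b) (y : {e // e ≠ b} → ℝ) (e : E) : ℝ :=
  if h : e = b then max 0 (2 * y ⟨a, hab⟩ - 1)
  else if e = a then min 1 (2 * y ⟨a, hab⟩) else y ⟨e, h⟩

variable {a b : E}

lemma mergeEdge_self (hab : a ≠ b) (x : E → ℝ) : mergeEdge a b x ⟨a, hab⟩ = (x a + x b) / 2 :=
  if_pos rfl

lemma mergeEdge_of_ne (x : E → ℝ) {e : {e // e ≠ b}} (he : e.1 ≠ a) : mergeEdge a b x e = x e :=
  if_neg he

lemma splitEdge_right (hab : a ≠ b) (y : {e // e ≠ b} → ℝ) :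
    splitEdge hab y b = max 0 (2 * y ⟨a, hab⟩ - 1) := dif_pos rfl

lemma splitEdge_left (hab : a ≠ b) (y : {e // e ≠ b} → ℝ) :
    splitEdge hab y a = min 1 (2 * y ⟨a, hab⟩) := by
  rw [splitEdge, dif_neg hab, if_pos rfl]

lemma splitEdge_of_ne (hab : a ≠ b) (y : {e // e ≠ b} → ℝ) {e : E} (ha : e ≠ a) (hb : e ≠ b) :
    splitEdge hab y e = y ⟨e, hb⟩ := by
  rw [splitEdge, dif_neg hb, if_neg ha]

variable [PartialOrder E]

lemma mergeEdge_mem_forestTree (hab : a < b) (hb : ∀ c, a < c → b ≤ c) {x : E → ℝ}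
    (hx : x ∈ forestTree E) : mergeEdge a b x ∈ forestTree {e // e ≠ b} := by
  have hsupp : ∀ e, mergeEdge a b x e ≠ 0 → x e.1 ≠ 0 := fun e he => by
    by_cases hea : e.1 = a
    · obtain ⟨e, heb⟩ := e
      obtain rfl : e = a := hea
      rw [mergeEdge_self] at he
      rcases hx.1.2 e b hab with h | h
      · exact fun h' => he (by rw [h, h']; norm_num)
      · exact fun h' => one_ne_zero (h.symm.trans h')
    · rwa [mergeEdge_of_ne x hea] at he
  refine ⟨⟨fun e => ?_, fun c d hcd => ?_⟩, fun c d hc hd => hx.2 _ _ (hsupp c hc) (hsupp d hd)⟩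
  · unfold mergeEdge
    split_ifs
    · have := hx.1.1 a
      have := hx.1.1 b
      constructor <;> linarith
    · exact hx.1.1 e
  · rw [or_iff_not_imp_left]
    intro hd
    have hd0 := hsupp d hd
    have hc1 := (hx.1.2 c d hcd).resolve_left hd0
    by_cases hca : c.1 = a
    · obtain ⟨c, hcb⟩ := c
      obtain rfl : c = a := hca
      have hbd : b < d.1 := (hb d hcd).lt_of_ne d.2.symm
      rw [mergeEdge_self, hc1, (hx.1.2 b d hbd).resolve_left hd0]
      norm_num
    · rw [mergeEdge_of_ne x hca, hc1]

lemma splitEdge_mem_forestTree (hE : IsForestOrder E) (hab : a < b) (hb : ∀ c, a < c → b ≤ c)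
    {y : {e // e ≠ b} → ℝ} (hy : y ∈ forestTree {e // e ≠ b}) :
    splitEdge hab.ne y ∈ forestTree E := by
  have hya := hy.1.1 ⟨a, hab.ne⟩
  have hlt : ∀ c, c < b → c ≤ a := fun c hc => by
    rcases hE c a b hc.le hab.le with h | h
    · exact h
    · exact (h.eq_or_lt.resolve_right fun h => hc.not_ge (hb c h)).ge
  have h1 : splitEdge hab.ne y b ≠ 0 → splitEdge hab.ne y a = 1 := fun h => by
    rw [splitEdge_right] at h
    rw [splitEdge_left]
    refine min_eq_left ?_
    by_contra! h'
    exact h (max_eq_left (by linarith))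
  have h2 : splitEdge hab.ne y a ≠ 0 → y ⟨a, hab.ne⟩ ≠ 0 := fun h h' => h (by
    rw [splitEdge_left, h']; norm_num)
  have h3 : ∀ c (hc : c ≠ b), splitEdge hab.ne y c ≠ 0 → y ⟨c, hc⟩ ≠ 0 := fun c hc h => by
    by_cases hca : c = a
    · subst hca
      exact h2 h
    · rwa [splitEdge_of_ne hab.ne y hca hc] at h
  have h4 : ∀ c (hc : c ≠ b), y ⟨c, hc⟩ = 1 → splitEdge hab.ne y c = 1 := fun c hc h => by
    by_cases hca : c = a
    · subst hca
      rw [splitEdge_left, h]; norm_num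
    · rwa [splitEdge_of_ne hab.ne y hca hc]
  refine ⟨⟨fun e => ?_, fun c d hcd => or_iff_not_imp_left.2 fun hd => ?_⟩, ?_⟩
  · unfold splitEdge
    split_ifs with h
    · exact ⟨le_max_left _ _, max_le zero_le_one (by linarith)⟩
    · exact ⟨le_min zero_le_one (by linarith), min_le_left _ _⟩
    · exact hy.1.1 ⟨e, h⟩
  · by_cases hdb : d = b
    · subst hdb
      rcases (hlt c hcd).eq_or_lt with rfl | hca
      · exact h1 hd
      · refine h4 c hcd.ne ((hy.1.2 ⟨c, hcd.ne⟩ ⟨a, hab.ne⟩ hca).resolve_left (h2 ?_))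
        rw [h1 hd]
        exact one_ne_zero
    · have hd' := h3 d hdb hd
      by_cases hcb : c = b
      · subst hcb
        have := (hy.1.2 ⟨a, hab.ne⟩ ⟨d, hdb⟩ (hab.trans hcd)).resolve_left hd'
        rw [splitEdge_right, this]
        norm_num
      · exact h4 c hcb ((hy.1.2 ⟨c, hcb⟩ ⟨d, hdb⟩ hcd).resolve_left hd')
  · have hbd : ∀ d, d ≠ b → splitEdge hab.ne y b ≠ 0 → splitEdge hab.ne y d ≠ 0 →
        b ≤ d ∨ d ≤ b := fun d hdb hb0 hd0 => by
      have ha0 : splitEdge hab.ne y a ≠ 0 := by rw [h1 hb0]; exact one_ne_zero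
      rcases hy.2 ⟨a, hab.ne⟩ ⟨d, hdb⟩ (h2 ha0) (h3 d hdb hd0) with h | h
      · rcases (show a ≤ d from h).eq_or_lt with rfl | h
        · exact Or.inr hab.le
        · exact Or.inl (hb d h)
      · exact Or.inr (le_trans (show d ≤ a from h) hab.le)
    intro c d hc hd
    by_cases hcb : c = b
    · by_cases hdb : d = b
      · exact Or.inl (by rw [hcb, hdb])
      · subst hcb
        exact hbd d hdb hc hd
    · by_cases hdb : d = b
      · subst hdb
        exact (hbd c hcb hd hc).symm
      · exact hy.2 ⟨c, hcb⟩ ⟨d, hdb⟩ (h3 c hcb hc) (h3 d hdb hd)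

lemma splitEdge_mergeEdge (hab : a < b) {x : E → ℝ} (hx : x ∈ forestTree E) :
    splitEdge hab.ne (mergeEdge a b x) = x := by
  have ha := hx.1.1 a
  have hb := hx.1.1 b
  ext e
  by_cases hea : e = a
  · subst hea
    rw [splitEdge_left, mergeEdge_self]
    rcases hx.1.2 e b hab with h | h
    · rw [h, min_eq_right] <;> linarith
    · rw [h, min_eq_left]; linarith
  by_cases heb : e = b
  · subst heb
    rw [splitEdge_right, mergeEdge_self]
    rcases hx.1.2 a e hab with h | h
    · rw [h, max_eq_left]; linarith
    · rw [h, max_eq_right] <;> linarith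
  rw [splitEdge_of_ne _ _ hea heb, mergeEdge_of_ne x hea]

lemma mergeEdge_splitEdge (hab : a < b) (y : {e // e ≠ b} → ℝ) :
    mergeEdge a b (splitEdge hab.ne y) = y := by
  ext ⟨e, heb⟩
  by_cases hea : e = a
  · subst hea
    rw [mergeEdge_self, splitEdge_left, splitEdge_right]
    rcases le_total 1 (2 * y ⟨e, heb⟩) with h | h
    · rw [min_eq_left h, max_eq_right (by linarith)]; ring
    · rw [min_eq_right h, max_eq_left (by linarith)]; ring
  · rw [mergeEdge_of_ne _ hea, splitEdge_of_ne _ _ hea heb]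

/-- Merging an edge with its only successor does not change the tree. -/
noncomputable def mergeHomeomorph (hE : IsForestOrder E) (hab : a < b) (hb : ∀ c, a < c → b ≤ c) :
    forestTree E ≃ₜ forestTree {e // e ≠ b} where
  toFun x := ⟨mergeEdge a b x.1, mergeEdge_mem_forestTree hab hb x.2⟩
  invFun y := ⟨splitEdge hab.ne y.1, splitEdge_mem_forestTree hE hab hb y.2⟩
  left_inv x := Subtype.ext (splitEdge_mergeEdge hab x.2)
  right_inv y := Subtype.ext (mergeEdge_splitEdge hab y.1)
  continuous_toFun := by
    have h : ∀ e : E, Continuous fun x : forestTree E => x.1 e :=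
      fun e => (continuous_apply e).comp continuous_subtype_val
    refine Continuous.subtype_mk (continuous_pi fun e => ?_) _
    unfold mergeEdge
    split_ifs
    · exact ((h a).add (h b)).div_const 2
    · exact h e
  continuous_invFun := by
    have h : ∀ e, Continuous fun y : forestTree {e // e ≠ b} => y.1 e :=
      fun e => (continuous_apply e).comp continuous_subtype_val
    refine Continuous.subtype_mk (continuous_pi fun e => ?_) _
    unfold splitEdge
    split_ifs with he
    · exact continuous_const.max (((h _).const_mul 2).sub continuous_const)
    · exact continuous_const.min ((h _).const_mul 2)
    · exact h _

/-- Every forest tree is the tree of a branching forest. -/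
lemma IsForestOrder.exists_branching {X : Type*} [TopologicalSpace X] {p : X} (n : ℕ) :
    ∀ (E : Type) [PartialOrder E] [Finite E], Nat.card E = n → IsForestOrder E →
      ∀ J : forestTree E ≃ₜ X, J 0 = p →
      ∃ (F : Type) (_ : PartialOrder F) (_ : Finite F) (K : forestTree F ≃ₜ X),
        IsForestOrder F ∧ IsBranchingOrder F ∧ K 0 = p := by
  induction n with
  | zero =>
    intro E _ _ hn hE J hJ
    have := (Finite.card_eq_zero_iff.1 hn)
    exact ⟨E, _, inferInstance, J, hE, fun a => this.elim a, hJ⟩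
  | succ n ih =>
    intro E _ _ hn hE J hJ
    by_cases hB : IsBranchingOrder E
    · exact ⟨E, _, inferInstance, J, hE, hB, hJ⟩
    unfold IsBranchingOrder at hB
    push Not at hB
    obtain ⟨a, b', hab', hb'⟩ := hB
    obtain ⟨b, hb⟩ := (toFinite {b | a < b ∧ b ≤ b'}).exists_minimal ⟨b', hab', le_rfl⟩
    obtain ⟨hab, hbb'⟩ := hb.prop
    have hsucc : ∀ c, a < c → b ≤ c := fun c hc => by
      by_cases h : b' ≤ c
      · exact hbb'.trans h
      · have hcb' := hb' c hc h
        rcases hE b c b' hbb' hcb' with h | h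
        · exact h
        · exact hb.le_of_le ⟨hc, hcb'⟩ h
    refine ih {e // e ≠ b} ?_ (fun c d e => hE c d e)
      ((mergeHomeomorph hE hab hsucc).symm.trans J) ?_
    · have := Fintype.ofFinite E
      classical
      rw [Nat.card_eq_fintype_card] at hn ⊢
      rw [Fintype.card_subtype_compl, Fintype.card_subtype_eq, hn, Nat.add_sub_cancel]
    · rw [Homeomorph.trans_apply, ← hJ]
      congr 1
      rw [Homeomorph.symm_apply_eq]
      refine Subtype.ext (funext fun e => ?_)
      simp [mergeHomeomorph, mergeEdge, forestTree_zero_apply]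

end Merge

section Growth

variable {E : Type*} [PartialOrder E]

/-- The forest `E` with one more edge, growing out of the end of the chain `D`. -/
def GrownForest (_ : LowerSet E) : Type _ := Option E

namespace GrownForest

variable {D : LowerSet E}

/-- The edges of the original forest. -/
def old (D : LowerSet E) (e : E) : GrownForest D := some e

/-- The additional edge. -/
def new (D : LowerSet E) : GrownForest D := none

instance [Finite E] : Finite (GrownForest D) := inferInstanceAs (Finite (Option E))

instance : PartialOrder (GrownForest D) where
  le
    | some a, some b => a ≤ b
    | some a, none => a ∈ D
    | none, some _ => False
    | none, none => True
  le_refl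
    | some a => le_refl a
    | none => trivial
  le_trans
    | some _, some _, some _, h, h' => le_trans (α := E) h h'
    | some _, some _, none, h, h' => D.lower h h'
    | some _, none, none, h, _ => h
    | none, none, none, _, _ => trivial
  le_antisymm
    | some _, some _, h, h' => congrArg some (le_antisymm (α := E) h h')
    | none, none, _, _ => rfl

lemma old_le_old {a b : E} : old D a ≤ old D b ↔ a ≤ b := Iff.rfl

lemma old_lt_old {a b : E} : old D a < old D b ↔ a < b := by
  rw [lt_iff_le_not_ge, lt_iff_le_not_ge, old_le_old, old_le_old]

lemma old_le_new {a : E} : old D a ≤ new D ↔ a ∈ D := Iff.rfl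

lemma not_new_le_old {a : E} : ¬ new D ≤ old D a := id

lemma old_lt_new {a : E} : old D a < new D ↔ a ∈ D :=
  ⟨fun h => old_le_new.1 h.le, fun h => lt_of_le_not_ge (old_le_new.2 h) not_new_le_old⟩

lemma not_new_lt {a : GrownForest D} : ¬ new D < a := by
  cases a with
  | none => exact lt_irrefl _
  | some a => exact fun h => not_new_le_old h.le

lemma cases_old_new {P : GrownForest D → Prop} (hold : ∀ e, P (old D e)) (hnew : P (new D)) :
    ∀ e, P e
  | some e => hold e
  | none => hnew

lemma isForestOrder (hE : IsForestOrder E) (hD : ∀ a ∈ D, ∀ b ∈ D, a ≤ b ∨ b ≤ a) :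
    IsForestOrder (GrownForest D)
  | some a, some b, some c, h, h' => hE a b c h h'
  | some a, some b, none, h, h' => hD a h b h'
  | some _, none, none, h, _ => Or.inl h
  | none, some _, none, _, h => Or.inr h
  | none, none, none, _, _ => Or.inl trivial

end GrownForest

open GrownForest

variable {D : LowerSet E}

/-- Extending a function by its value at the additional edge. -/
def growFun (D : LowerSet E) (x : E → ℝ) (t : ℝ) : GrownForest D → ℝ
  | some e => x e
  | none => t

lemma growFun_mem_forestTree {x : E → ℝ} (hx : x ∈ forestTree E) {t : ℝ} (ht : t ∈ Icc (0 : ℝ) 1)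
    (h : t = 0 ∨ (∀ e ∈ D, x e = 1) ∧ ∀ e ∉ D, x e = 0) : growFun D x t ∈ forestTree (GrownForest D) := by
  have hold : ∀ a, x a ≠ 0 → t ≠ 0 → a ∈ D := fun a ha ht => by
    by_contra haD
    exact ha ((h.resolve_left ht).2 a haD)
  refine ⟨⟨cases_old_new hx.1.1 ht, cases_old_new (fun a => cases_old_new (fun b hab => ?_) fun ha =>
    ?_) fun b hb => (not_new_lt hb).elim⟩, cases_old_new (fun a => cases_old_new (fun b ha hb => ?_)
    fun ha ht => ?_) (cases_old_new (fun b ht hb => ?_) fun _ _ => ?_)⟩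
  · exact hx.1.2 a b (old_lt_old.1 hab)
  · exact h.imp id fun h => h.1 a (old_lt_new.1 ha)
  · exact hx.2 a b ha hb
  · exact Or.inl (old_le_new.2 (hold a ha ht))
  · exact Or.inr (old_le_new.2 (hold b hb ht))
  · exact Or.inl le_rfl

/-- Forgetting the additional edge. -/
def restrictOld (y : forestTree (GrownForest D)) : forestTree E :=
  ⟨fun e => y.1 (old D e), ⟨fun _ => y.2.1.1 _, fun _ _ hab => y.2.1.2 _ _ (old_lt_old.2 hab)⟩,
    fun _ _ ha hb => y.2.2 _ _ ha hb⟩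

lemma continuous_restrictOld : Continuous (restrictOld (D := D)) :=
  Continuous.subtype_mk (f := fun (y : forestTree (GrownForest D)) e => y.1 (old D e))
    (continuous_pi fun e => (continuous_apply (old D e)).comp continuous_subtype_val) _

lemma forestTree_ext_grown {y z : forestTree (GrownForest D)} (h : restrictOld y = restrictOld z)
    (hnew : y.1 (new D) = z.1 (new D)) : y = z :=
  Subtype.ext (funext (cases_old_new (fun e => congrFun (congrArg Subtype.val h) e) hnew))

/-- The end of the chain of edges `D`. -/
def IsTip (D : LowerSet E) (x : forestTree E) : Prop :=
  (∀ e ∈ D, x.1 e = 1) ∧ ∀ e ∉ D, x.1 e = 0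

lemma IsTip.restrictOld_eq {x : forestTree E} (hx : IsTip D x) {y : forestTree (GrownForest D)}
    (hy : y.1 (new D) ≠ 0) : restrictOld y = x := by
  refine Subtype.ext (funext fun e => ?_)
  by_cases he : e ∈ D
  · rw [hx.1 e he]
    exact (y.2.1.2 _ _ (old_lt_new.2 he)).resolve_left hy
  · rw [hx.2 e he]
    by_contra h
    exact (y.2.2 _ _ h hy).elim he not_new_le_old

variable {X : Type*}

open Classical in
/-- Mapping the additional edge along the arc `γ`. -/
noncomputable def growMap (D : LowerSet E) (j : forestTree E → X) (γ : ℝ → X)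
    (y : forestTree (GrownForest D)) : X :=
  if y.1 (new D) = 0 then j (restrictOld y) else γ (y.1 (new D))

lemma growMap_of_eq_zero {j : forestTree E → X} {γ : ℝ → X} {y : forestTree (GrownForest D)}
    (hy : y.1 (new D) = 0) : growMap D j γ y = j (restrictOld y) := if_pos hy

lemma growMap_of_ne_zero {j : forestTree E → X} {γ : ℝ → X} {y : forestTree (GrownForest D)}
    (hy : y.1 (new D) ≠ 0) : growMap D j γ y = γ (y.1 (new D)) := if_neg hy

lemma IsTip.injective_growMap {x : forestTree E} (hx : IsTip D x) {j : forestTree E → X}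
    (hj : Function.Injective j) {γ : ℝ → X} (hγ : InjOn γ (Icc 0 1))
    (hdisj : ∀ t ∈ Ioc (0 : ℝ) 1, γ t ∉ range j) : Function.Injective (growMap D j γ) := by
  have hIoc : ∀ y : forestTree (GrownForest D), y.1 (new D) ≠ 0 → y.1 (new D) ∈ Ioc (0 : ℝ) 1 :=
    fun y hy => ⟨(y.2.1.1 _).1.lt_of_ne' hy, (y.2.1.1 _).2⟩
  intro y z h
  by_cases hy : y.1 (new D) = 0
  · rw [growMap_of_eq_zero hy] at h
    by_cases hz : z.1 (new D) = 0
    · rw [growMap_of_eq_zero hz] at h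
      exact forestTree_ext_grown (hj h) (hy.trans hz.symm)
    · rw [growMap_of_ne_zero hz] at h
      exact (hdisj _ (hIoc z hz) ⟨_, h⟩).elim
  · rw [growMap_of_ne_zero hy] at h
    by_cases hz : z.1 (new D) = 0
    · rw [growMap_of_eq_zero hz] at h
      exact (hdisj _ (hIoc y hy) ⟨_, h.symm⟩).elim
    · rw [growMap_of_ne_zero hz] at h
      exact forestTree_ext_grown ((hx.restrictOld_eq hy).trans (hx.restrictOld_eq hz).symm)
        (hγ (y.2.1.1 _) (z.2.1.1 _) h)

/-- The point of the grown tree lying on the original tree. -/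
def growPoint (D : LowerSet E) (x : forestTree E) : forestTree (GrownForest D) :=
  ⟨growFun D x.1 0, growFun_mem_forestTree x.2 ⟨le_rfl, zero_le_one⟩ (Or.inl rfl)⟩

lemma growMap_growPoint {j : forestTree E → X} {γ : ℝ → X} (x : forestTree E) :
    growMap D j γ (growPoint D x) = j x := growMap_of_eq_zero rfl

lemma IsTip.exists_growMap_eq {x : forestTree E} (hx : IsTip D x) (j : forestTree E → X)
    (γ : ℝ → X) {t : ℝ} (ht : t ∈ Ioc (0 : ℝ) 1) :
    ∃ y, growMap D j γ y = γ t ∧ ((∀ e, x.1 e = 0 ∨ x.1 e = 1) → t = 1 →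
      ∀ e, y.1 e = 0 ∨ y.1 e = 1) :=
  ⟨⟨growFun D x.1 t, growFun_mem_forestTree x.2 ⟨ht.1.le, ht.2⟩ (Or.inr hx)⟩,
    growMap_of_ne_zero ht.1.ne', fun h h' => cases_old_new h (Or.inr h')⟩

lemma IsTip.range_growMap {x : forestTree E} (hx : IsTip D x) {j : forestTree E → X}
    {γ : ℝ → X} (h0 : γ 0 = j x) : range (growMap D j γ) = range j ∪ γ '' Icc 0 1 := by
  refine Subset.antisymm ?_ (union_subset ?_ ?_)
  · rintro _ ⟨y, rfl⟩
    by_cases hy : y.1 (new D) = 0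
    · exact Or.inl ⟨_, (growMap_of_eq_zero hy).symm⟩
    · exact Or.inr ⟨_, y.2.1.1 _, (growMap_of_ne_zero hy).symm⟩
  · rintro _ ⟨x, rfl⟩
    exact ⟨_, growMap_growPoint x⟩
  · rintro _ ⟨t, ht, rfl⟩
    rcases ht.1.eq_or_lt with rfl | h
    · exact ⟨growPoint D x, (growMap_growPoint x).trans h0.symm⟩
    · obtain ⟨y, hy, -⟩ := hx.exists_growMap_eq j γ ⟨h, ht.2⟩
      exact ⟨y, hy⟩

lemma IsTip.continuous_growMap [TopologicalSpace X] {x : forestTree E} (hx : IsTip D x) {j : forestTree E → X}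
    (hj : Continuous j) {γ : ℝ → X} (hγ : Continuous γ) (h0 : γ 0 = j x) :
    Continuous (growMap D j γ) := by
  have hnew : Continuous fun y : forestTree (GrownForest D) => y.1 (new D) :=
    (continuous_apply _).comp continuous_subtype_val
  have hcov : {y : forestTree (GrownForest D) | y.1 (new D) = 0} ∪ {y | restrictOld y = x} =
      univ := eq_univ_of_forall fun y => or_iff_not_imp_left.2 fun hy => hx.restrictOld_eq hy
  rw [← continuousOn_univ, ← hcov]
  refine ContinuousOn.union_of_isClosed ?_ ?_ (isClosed_eq hnew continuous_const)
    (isClosed_eq continuous_restrictOld continuous_const)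
  · exact (hj.comp continuous_restrictOld).continuousOn.congr fun y hy => growMap_of_eq_zero hy
  · refine (hγ.comp hnew).continuousOn.congr fun y hy => ?_
    by_cases hy0 : y.1 (new D) = 0
    · rw [growMap_of_eq_zero hy0, Function.comp_apply, hy0, h0]
      exact congrArg j hy
    · exact growMap_of_ne_zero hy0

end Growth

section Concatenation

variable {X : Type*}

open Classical in
/-- Running through `α` and then through `β`. -/
noncomputable def concatPath (α β : ℝ → X) (t : ℝ) : X :=
  if t ≤ 1 / 2 then α (2 * t) else β (2 * t - 1)

variable {α β : ℝ → X} {t : ℝ}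

lemma concatPath_of_le (h : t ≤ 1 / 2) : concatPath α β t = α (2 * t) := if_pos h

lemma concatPath_of_lt (h : 1 / 2 < t) : concatPath α β t = β (2 * t - 1) := if_neg h.not_ge

lemma concatPath_zero : concatPath α β 0 = α 0 := by
  rw [concatPath_of_le (by norm_num), mul_zero]

lemma concatPath_one : concatPath α β 1 = β 1 := by
  rw [concatPath_of_lt (by norm_num)]
  norm_num

lemma continuous_concatPath [TopologicalSpace X] (hα : Continuous α) (hβ : Continuous β)
    (h : α 1 = β 0) : Continuous (concatPath α β) := by
  refine Continuous.if_le (hα.comp (continuous_const.mul continuous_id))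
    (hβ.comp ((continuous_const.mul continuous_id).sub continuous_const)) continuous_id
    continuous_const fun t ht => ?_
  obtain rfl : t = 1 / 2 := ht
  norm_num [h]

lemma injOn_concatPath {B : Set ℝ} (hα : InjOn α (Icc 0 1)) (hβ : InjOn β B)
    (h : ∀ s ∈ Icc (0 : ℝ) 1, ∀ t ∈ B, α s ≠ β t) :
    InjOn (concatPath α β) {t | 0 ≤ t ∧ (1 / 2 < t → 2 * t - 1 ∈ B)} := by
  intro s hs t ht hst
  have hI : ∀ r : ℝ, 0 ≤ r → r ≤ 1 / 2 → 2 * r ∈ Icc (0 : ℝ) 1 :=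
    fun r h h' => ⟨by linarith, by linarith⟩
  rcases le_or_gt s (1 / 2) with hs' | hs' <;> rcases le_or_gt t (1 / 2) with ht' | ht'
  · rw [concatPath_of_le hs', concatPath_of_le ht'] at hst
    linarith [hα (hI s hs.1 hs') (hI t ht.1 ht') hst]
  · rw [concatPath_of_le hs', concatPath_of_lt ht'] at hst
    exact (h _ (hI s hs.1 hs') _ (ht.2 ht') hst).elim
  · rw [concatPath_of_lt hs', concatPath_of_le ht'] at hst
    exact (h _ (hI t ht.1 ht') _ (hs.2 hs') hst.symm).elim
  · rw [concatPath_of_lt hs', concatPath_of_lt ht'] at hst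
    linarith [hβ (hs.2 hs') (ht.2 ht') hst]

end Concatenation

section ArcJoined

variable {X : Type*} [TopologicalSpace X]

/-- The points `u` and `v` are joined by an arc in `S`. -/
def ArcJoined (S : Set X) (u v : X) : Prop :=
  ∃ f : ℝ → X, Continuous f ∧ InjOn f (Icc 0 1) ∧ f '' Icc 0 1 ⊆ S ∧ f 0 = u ∧ f 1 = v

variable {S T : Set X} {u v : X}

lemma ArcJoined.mono (h : ArcJoined S u v) (hST : S ⊆ T) : ArcJoined T u v := by
  obtain ⟨f, hf, hi, hS, hfu, hfv⟩ := h
  exact ⟨f, hf, hi, hS.trans hST, hfu, hfv⟩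

lemma arcJoined_image {γ : ℝ → X} (hγ : Continuous γ) (hi : InjOn γ (Icc 0 1)) {s t : ℝ}
    (hs : s ∈ Icc (0 : ℝ) 1) (ht : t ∈ Icc (0 : ℝ) 1) (hst : s ≠ t) :
    ArcJoined (γ '' Icc 0 1) (γ s) (γ t) := by
  have hI : ∀ r ∈ Icc (0 : ℝ) 1, s + (t - s) * r ∈ Icc (0 : ℝ) 1 := fun r hr => by
    constructor <;> nlinarith [hs.1, hs.2, ht.1, ht.2, hr.1, hr.2]
  refine ⟨fun r => γ (s + (t - s) * r), by fun_prop, fun r hr r' hr' h => ?_, ?_, by simp, by simp⟩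
  · have := hi (hI r hr) (hI r' hr') h
    exact mul_left_cancel₀ (sub_ne_zero.2 hst.symm) (by linarith)
  · rintro _ ⟨r, hr, rfl⟩
    exact ⟨_, hI r hr, rfl⟩

lemma ArcJoined.symm (h : ArcJoined S u v) : ArcJoined S v u := by
  obtain ⟨f, hf, hi, hS, rfl, rfl⟩ := h
  exact (arcJoined_image hf hi ⟨zero_le_one, le_rfl⟩ ⟨le_rfl, zero_le_one⟩ one_ne_zero).mono hS

lemma ArcJoined.concat {γ : ℝ → X} (h : ArcJoined S u (γ 0)) (hγ : Continuous γ)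
    (hi : InjOn γ (Icc 0 1)) (hS : ∀ t ∈ Ioc (0 : ℝ) 1, γ t ∉ S) :
    ArcJoined (S ∪ γ '' Icc 0 1) u (γ 1) := by
  obtain ⟨f, hf, hif, hfS, rfl, hfv⟩ := h
  have := injOn_concatPath hif (hi.mono Ioc_subset_Icc_self)
    fun s hs t ht h => hS t ht (h ▸ hfS ⟨s, hs, rfl⟩)
  refine ⟨concatPath f γ, continuous_concatPath hf hγ hfv, this.mono ?_, ?_, concatPath_zero, concatPath_one⟩
  · exact fun t ht => ⟨ht.1, fun h => ⟨by linarith, by linarith [ht.2]⟩⟩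
  rintro _ ⟨t, ht, rfl⟩
  rcases le_or_gt t (1 / 2) with h | h
  · rw [concatPath_of_le h]
    exact Or.inl (hfS ⟨_, ⟨by linarith [ht.1], by linarith⟩, rfl⟩)
  · rw [concatPath_of_lt h]
    exact Or.inr ⟨_, ⟨by linarith [ht.1], by linarith [ht.2]⟩, rfl⟩

/-- Any two points of `S` are joined by an arc in `S`. -/
def IsArcwiseConnected (S : Set X) : Prop := ∀ u ∈ S, ∀ v ∈ S, u ≠ v → ArcJoined S u v

lemma IsArcwiseConnected.union_image {γ : ℝ → X} (h : IsArcwiseConnected S) (hγ : Continuous γ)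
    (hi : InjOn γ (Icc 0 1)) (h0 : γ 0 ∈ S) (hS : ∀ t ∈ Ioc (0 : ℝ) 1, γ t ∉ S) :
    IsArcwiseConnected (S ∪ γ '' Icc 0 1) := by
  have key : ∀ u ∈ S, ∀ t ∈ Icc (0 : ℝ) 1, u ≠ γ t → ArcJoined (S ∪ γ '' Icc 0 1) u (γ t) := by
    intro u hu t ht hut
    rcases ht.1.eq_or_lt with rfl | ht0
    · exact (h u hu _ h0 hut).mono subset_union_left
    by_cases hu0 : u = γ 0
    · rw [hu0]
      exact (arcJoined_image hγ hi ⟨le_rfl, zero_le_one⟩ ht ht0.ne).mono subset_union_right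
    have hI : ∀ r ∈ Icc (0 : ℝ) 1, t * r ∈ Icc (0 : ℝ) 1 := fun r hr =>
      ⟨mul_nonneg ht.1 hr.1, mul_le_one₀ ht.2 hr.1 hr.2⟩
    have := ArcJoined.concat (γ := fun r => γ (t * r)) (S := S) (u := u)
      (by simpa using h u hu _ h0 hu0) (by fun_prop)
      (fun r hr r' hr' e => mul_left_cancel₀ ht0.ne' (hi (hI r hr) (hI r' hr') e))
      fun r hr => hS _ ⟨mul_pos ht0 hr.1, (hI r (Ioc_subset_Icc_self hr)).2⟩
    rw [mul_one] at this
    refine this.mono (union_subset_union_right _ ?_)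
    rintro _ ⟨r, hr, rfl⟩
    exact ⟨_, hI r hr, rfl⟩
  rintro u (hu | ⟨s, hs, rfl⟩) v (hv | ⟨t, ht, rfl⟩) huv
  · exact (h u hu v hv huv).mono subset_union_left
  · exact key u hu t ht huv
  · exact (key v hv s hs huv.symm).symm
  · exact (arcJoined_image hγ hi hs ht fun h => huv (congrArg γ h)).mono subset_union_right

lemma exists_isSimpleClosedCurve [T2Space X] {f : ℝ → X} (hf : Continuous f) (h : f 0 = f 1)
    (hi : InjOn f (Ico 0 1)) : ∃ S : Set X, IsSimpleClosedCurve S := by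
  have : Fact ((0 : ℝ) < 1) := ⟨one_pos⟩
  have hc : Continuous (AddCircle.liftIco (1 : ℝ) 0 f) :=
    AddCircle.liftIco_zero_continuous h hf.continuousOn
  have hinj : Function.Injective (AddCircle.liftIco (1 : ℝ) 0 f) := by
    intro x y hxy
    obtain ⟨s, hs, rfl⟩ := AddCircle.eq_coe_Ico x
    obtain ⟨t, ht, rfl⟩ := AddCircle.eq_coe_Ico y
    rw [AddCircle.liftIco_zero_coe_apply hs, AddCircle.liftIco_zero_coe_apply ht] at hxy
    rw [hi hs ht hxy]
  exact ⟨_, ⟨((hc.isClosedEmbedding hinj).isEmbedding.toHomeomorph.symm).trans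
    (AddCircle.homeomorphCircle one_ne_zero)⟩⟩

lemma ArcJoined.exists_isSimpleClosedCurve [T2Space X] {γ : ℝ → X} (h : ArcJoined S (γ 1) (γ 0))
    (hγ : Continuous γ) (hi : InjOn γ (Ioo 0 1)) (hS : ∀ t ∈ Ioo (0 : ℝ) 1, γ t ∉ S) :
    ∃ S : Set X, IsSimpleClosedCurve S := by
  obtain ⟨f, hf, hif, hfS, hf0, hf1⟩ := h
  have := injOn_concatPath hif hi fun s hs t ht h => hS t ht (h ▸ hfS ⟨s, hs, rfl⟩)
  refine _root_.exists_isSimpleClosedCurve (continuous_concatPath hf hγ hf1) ?_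
    (this.mono ?_)
  · rw [concatPath_zero, concatPath_one, hf0]
  · exact fun t ht => ⟨ht.1, fun h => ⟨by linarith, by linarith [ht.2]⟩⟩

end ArcJoined

section ArcDecomposition

variable {X : Type*} [TopologicalSpace X]

lemma IsArcSet.exists_parametrization {A : Set X} (hA : IsArcSet A) :
    ∃ γ : ℝ → X, Continuous γ ∧ InjOn γ (Icc 0 1) ∧ γ '' Icc 0 1 = A ∧
      ∀ s ∈ Icc (0 : ℝ) 1, IsArcEndpoint A (γ s) → s = 0 ∨ s = 1 := by
  obtain ⟨h⟩ := hA
  have hγ : ∀ t (ht : t ∈ Icc (0 : ℝ) 1),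
      (h.symm (projIcc 0 1 zero_le_one t)).1 = (h.symm ⟨t, ht⟩).1 := fun t ht => by
    rw [projIcc_of_mem zero_le_one ht]
  refine ⟨fun t => (h.symm (projIcc 0 1 zero_le_one t)).1, continuous_subtype_val.comp
    (h.symm.continuous.comp continuous_projIcc), fun s hs t ht hst => ?_, ?_, ?_⟩
  · beta_reduce at hst
    rw [hγ s hs, hγ t ht] at hst
    exact congrArg Subtype.val (h.symm.injective (Subtype.ext hst))
  · refine Subset.antisymm ?_ fun x hx => ?_
    · rintro _ ⟨t, -, rfl⟩
      exact Subtype.prop _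
    · refine ⟨h ⟨x, hx⟩, Subtype.prop _, ?_⟩
      beta_reduce
      rw [projIcc_val, h.symm_apply_apply]
  · rintro s hs ⟨b, h', h0, -⟩
    beta_reduce at h0
    rw [hγ s hs] at h0
    have hk0 : h (h' ⟨0, le_rfl, zero_le_one⟩) = ⟨s, hs⟩ := by
      rw [Subtype.ext h0, h.apply_symm_apply]
    by_contra! hs01
    let k : ℝ → ℝ := fun t => (h (h' (projIcc 0 1 zero_le_one t))).1
    have hk : Continuous k := continuous_subtype_val.comp
      (h.continuous.comp (h'.continuous.comp continuous_projIcc))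
    have hmem : ∀ y (hy : y ∈ Icc (0 : ℝ) 1), y ≠ s → y ∈ k '' Ioc 0 1 := fun y hy hys => by
      obtain ⟨z, hz⟩ := (h'.trans h).surjective ⟨y, hy⟩
      have hz' : h (h' z) = ⟨y, hy⟩ := hz
      refine ⟨z, ⟨z.2.1.lt_of_ne' fun h0 => hys ?_, z.2.2⟩, ?_⟩
      · rw [show z = ⟨0, le_rfl, zero_le_one⟩ from Subtype.ext h0, hk0] at hz'
        exact congrArg Subtype.val hz'.symm
      · change (h (h' (projIcc 0 1 zero_le_one z.1))).1 = y
        rw [projIcc_val, hz']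
    obtain ⟨t, ht, hts⟩ := (isPreconnected_Ioc.image k hk.continuousOn).Icc_subset
      (hmem 0 ⟨le_rfl, zero_le_one⟩ hs01.1.symm) (hmem 1 ⟨zero_le_one, le_rfl⟩ hs01.2.symm) hs
    have := h'.injective (h.injective ((Subtype.ext hts : _ = ⟨s, hs⟩).trans hk0.symm))
    rw [projIcc_of_mem zero_le_one ⟨ht.1.le, ht.2⟩] at this
    exact ht.1.ne' (congrArg Subtype.val this)

/-- The arcs `γ i` cover the space, and meet each other and the point `p` only at their ends. -/
structure IsArcDecomposition {ι : Type*} (p : X) (γ : ι → ℝ → X) : Prop where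
  continuous (i : ι) : Continuous (γ i)
  injOn (i : ι) : InjOn (γ i) (Icc 0 1)
  eq_or_eq {i j : ι} {s t : ℝ} (hs : s ∈ Icc (0 : ℝ) 1) (ht : t ∈ Icc (0 : ℝ) 1) (hij : i ≠ j)
    (h : γ i s = γ j t) : s = 0 ∨ s = 1
  exists_eq (x : X) : ∃ i, ∃ t ∈ Icc (0 : ℝ) 1, γ i t = x
  base {i : ι} {s : ℝ} (hs : s ∈ Icc (0 : ℝ) 1) (h : γ i s = p) : s = 0 ∨ s = 1

/-- The parametrizations of the two halves of `[0, 1]` cut at `c`. -/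
def halfParam (c : ℝ) : Bool → ℝ → ℝ
  | false, t => c * t
  | true, t => c + (1 - c) * t

section HalfParam

variable {c s t : ℝ} {b b' : Bool}

lemma continuous_halfParam : ∀ b, Continuous (halfParam c b)
  | false => continuous_const.mul continuous_id
  | true => continuous_const.add (continuous_const.mul continuous_id)

lemma halfParam_mem (hc : c ∈ Ioo (0 : ℝ) 1) (ht : t ∈ Icc (0 : ℝ) 1) :
    ∀ b, halfParam c b t ∈ Icc (0 : ℝ) 1
  | false => by
    constructor <;> simp only [halfParam] <;> nlinarith [hc.1, hc.2, ht.1, ht.2]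
  | true => by
    constructor <;> simp only [halfParam] <;> nlinarith [hc.1, hc.2, ht.1, ht.2]

lemma halfParam_injective (hc : c ∈ Ioo (0 : ℝ) 1) : ∀ b, Function.Injective (halfParam c b)
  | false => fun _ _ h => mul_left_cancel₀ hc.1.ne' h
  | true => fun _ _ h => mul_left_cancel₀ (sub_pos.2 hc.2).ne' (add_left_cancel h)

lemma halfParam_eq_endpoint (hc : c ∈ Ioo (0 : ℝ) 1) (ht : t ∈ Icc (0 : ℝ) 1)
    (h : halfParam c b t = 0 ∨ halfParam c b t = c ∨ halfParam c b t = 1) : t = 0 ∨ t = 1 := by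
  obtain ⟨hc0, hc1⟩ := hc
  by_contra! hne
  have h0 := ht.1.lt_of_ne' hne.1
  have h1 := ht.2.lt_of_ne hne.2
  cases b <;> simp only [halfParam] at h <;> rcases h with h | h | h <;> nlinarith

lemma halfParam_eq_of_ne (hc : c ∈ Ioo (0 : ℝ) 1) (hs : s ∈ Icc (0 : ℝ) 1)
    (ht : t ∈ Icc (0 : ℝ) 1) (hb : b ≠ b') (h : halfParam c b s = halfParam c b' t) :
    halfParam c b s = c := by
  obtain ⟨hc0, hc1⟩ := hc
  obtain ⟨hs0, hs1⟩ := hs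
  obtain ⟨ht0, ht1⟩ := ht
  cases b <;> cases b' <;> simp only [halfParam, ne_eq, not_true_eq_false] at * <;> nlinarith

lemma exists_halfParam_eq (hc : c ∈ Ioo (0 : ℝ) 1) (ht : t ∈ Icc (0 : ℝ) 1) :
    ∃ b, ∃ r ∈ Icc (0 : ℝ) 1, halfParam c b r = t := by
  rcases le_total t c with h | h
  · exact ⟨false, t / c, ⟨div_nonneg ht.1 hc.1.le, (div_le_one hc.1).2 h⟩,
      mul_div_cancel₀ _ hc.1.ne'⟩
  · have h1 := sub_pos.2 hc.2
    refine ⟨true, (t - c) / (1 - c), ⟨div_nonneg (sub_nonneg.2 h) h1.le,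
      (div_le_one h1).2 (by linarith [ht.2])⟩, ?_⟩
    simp only [halfParam]
    rw [mul_div_cancel₀ _ h1.ne']
    ring

end HalfParam

end ArcDecomposition

lemma IsFiniteGraph.exists_isArcDecomposition {X : Type u} [MetricSpace X] (hX : IsFiniteGraph X)
    (p : X) :
    ∃ (ι : Type u) (_ : Finite ι) (γ : ι → ℝ → X), IsArcDecomposition p γ := by
  obtain ⟨-, -, -, 𝒜, harc, hcov, hends⟩ := hX
  choose γ hγ hinj hrange hend using fun A : 𝒜 => (harc A A.2).exists_parametrization
  have hcut : ∀ A : 𝒜, ∃ c ∈ Ioo (0 : ℝ) 1, ∀ s ∈ Ioo (0 : ℝ) 1, γ A s = p → s = c := by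
    intro A
    by_cases h : ∃ c ∈ Ioo (0 : ℝ) 1, γ A c = p
    · obtain ⟨c, hc, hcp⟩ := h
      exact ⟨c, hc, fun s hs hsp => hinj A (Ioo_subset_Icc_self hs) (Ioo_subset_Icc_self hc)
        (hsp.trans hcp.symm)⟩
    · exact ⟨1 / 2, ⟨by norm_num, by norm_num⟩, fun s hs hsp => (h ⟨s, hs, hsp⟩).elim⟩
  choose c hc hcp using hcut
  have hmem : ∀ (A : 𝒜) (s), s ∈ Icc (0 : ℝ) 1 → γ A s ∈ A.1 := fun A s hs => by
    rw [← hrange A]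
    exact mem_image_of_mem _ hs
  refine ⟨𝒜 × Bool, inferInstance, fun i t => γ i.1 (halfParam (c i.1) i.2 t), ⟨fun i =>
    (hγ _).comp (continuous_halfParam _), fun i s hs t ht h => ?_, ?_, fun x => ?_, ?_⟩⟩
  · exact halfParam_injective (hc _) _
      (hinj _ (halfParam_mem (hc _) hs _) (halfParam_mem (hc _) ht _) h)
  · rintro ⟨A, b⟩ ⟨B, b'⟩ s t hs ht hne h
    beta_reduce at h
    have hs' := halfParam_mem (hc A) hs b
    have ht' := halfParam_mem (hc B) ht b'
    by_cases hAB : A = B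
    · subst hAB
      have hb : b ≠ b' := fun h => hne (by rw [h])
      exact halfParam_eq_endpoint (hc A) hs (Or.inr (Or.inl
        (halfParam_eq_of_ne (hc A) hs ht hb (hinj _ hs' ht' h))))
    · have hx : γ A (halfParam (c A) b s) ∈ A.1 ∩ B.1 :=
        ⟨hmem A _ hs', by rw [h]; exact hmem B _ ht'⟩
      have := (hends A A.2 B B.2 (fun h => hAB (Subtype.ext h)) _ hx).1
      exact halfParam_eq_endpoint (hc A) hs ((hend A _ hs' this).imp_right Or.inr)
  · obtain ⟨A, hA, hxA⟩ := hcov.symm ▸ mem_univ x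
    obtain ⟨t, ht, rfl⟩ := (hrange ⟨A, hA⟩).ge hxA
    obtain ⟨b, r, hr, rfl⟩ := exists_halfParam_eq (hc ⟨A, hA⟩) ht
    exact ⟨(⟨A, hA⟩, b), r, hr, rfl⟩
  · rintro ⟨A, b⟩ s hs h
    beta_reduce at h
    have hs' := halfParam_mem (hc A) hs b
    refine halfParam_eq_endpoint (b := b) (hc A) hs ?_
    by_contra! hne
    exact hne.2.1 (hcp A _ ⟨hs'.1.lt_of_ne' hne.1, hs'.2.lt_of_ne hne.2.2⟩ h)

section ForestModel

variable {X : Type*} [TopologicalSpace X] {ι : Type*} {p : X} {γ : ι → ℝ → X} {J : Set ι}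

/-- The map `j` embeds the tree of the forest `E`, rooted at `p`, onto the union of `p` and the arcs
indexed by `J`, in such a way that the ends of these arcs become vertices. -/
structure IsForestModel (p : X) (γ : ι → ℝ → X) (J : Set ι) {E : Type*} [PartialOrder E]
    (j : forestTree E → X) : Prop where
  isForestOrder : IsForestOrder E
  continuous : Continuous j
  injective : Function.Injective j
  zero : j 0 = p
  range_eq : range j = insert p (⋃ i ∈ J, γ i '' Icc 0 1)
  vertex : ∀ i ∈ J, ∀ t, t = 0 ∨ t = 1 → ∃ x, j x = γ i t ∧ ∀ e, x.1 e = 0 ∨ x.1 e = 1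
  isArcwiseConnected : IsArcwiseConnected (range j)

lemma isForestModel_empty :
    IsForestModel p γ ∅ (E := Empty) fun _ => p where
  isForestOrder a := a.elim
  continuous := continuous_const
  injective x y _ := Subtype.ext (funext fun e => e.elim)
  zero := rfl
  range_eq := by
    have : Nonempty (forestTree Empty) := ⟨0⟩
    simp
  vertex i hi := hi.elim
  isArcwiseConnected := by
    rintro _ ⟨x, rfl⟩ _ ⟨y, rfl⟩ h
    exact (h rfl).elim

variable {E : Type*} [PartialOrder E] {j : forestTree E → X}

/-- The chain of edges leading to a vertex of the tree. -/
def supportChain (x : forestTree E) : LowerSet E :=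
  ⟨{e | x.1 e ≠ 0}, fun a b hba ha => by
    rcases hba.eq_or_lt with rfl | h
    · exact ha
    · have := (x.2.1.2 b a h).resolve_left ha
      exact fun h0 => one_ne_zero (this.symm.trans h0)⟩

lemma isTip_supportChain {x : forestTree E} (hx : ∀ e, x.1 e = 0 ∨ x.1 e = 1) :
    IsTip (supportChain x) x :=
  ⟨fun e he => (hx e).resolve_left he, fun _ he => not_not.1 he⟩

lemma IsForestModel.grow {δ : ℝ → X} (hj : IsForestModel p γ J j) {x : forestTree E}
    (hx : ∀ e, x.1 e = 0 ∨ x.1 e = 1) (hδ : Continuous δ) (hδi : InjOn δ (Icc 0 1))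
    (h0 : δ 0 = j x) (hdisj : ∀ t ∈ Ioc (0 : ℝ) 1, δ t ∉ range j) {i : ι}
    (himage : δ '' Icc 0 1 = γ i '' Icc 0 1)
    (hends : ∀ t, t = 0 ∨ t = 1 → ∃ s, (s = 0 ∨ s = 1) ∧ δ s = γ i t) :
    IsForestModel p γ (insert i J) (growMap (supportChain x) j δ) where
  isForestOrder := GrownForest.isForestOrder hj.isForestOrder fun a ha b hb => x.2.2 a b ha hb
  continuous := (isTip_supportChain hx).continuous_growMap hj.continuous hδ h0
  injective := (isTip_supportChain hx).injective_growMap hj.injective hδi hdisj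
  zero := (growMap_of_eq_zero rfl).trans hj.zero
  range_eq := by
    rw [(isTip_supportChain hx).range_growMap h0, hj.range_eq, himage, biUnion_insert,
      insert_union, union_comm]
  vertex := by
    have hgrow : ∀ y : forestTree E, (∀ e, y.1 e = 0 ∨ y.1 e = 1) →
        ∀ e, (growPoint (supportChain x) y).1 e = 0 ∨ (growPoint (supportChain x) y).1 e = 1 :=
      fun y hy => GrownForest.cases_old_new hy (Or.inl rfl)
    rintro k (rfl | hk) t ht
    · obtain ⟨s, rfl | rfl, hs⟩ := hends t ht
      · exact ⟨growPoint _ x, (growMap_growPoint x).trans (h0.symm.trans hs), hgrow x hx⟩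
      · obtain ⟨y, hy, hy'⟩ := (isTip_supportChain hx).exists_growMap_eq j δ ⟨one_pos, le_rfl⟩
        exact ⟨y, hy.trans hs, hy' hx rfl⟩
    · obtain ⟨y, hy, hy'⟩ := hj.vertex k hk t ht
      exact ⟨growPoint _ y, (growMap_growPoint y).trans hy, hgrow y hy'⟩
  isArcwiseConnected := by
    rw [(isTip_supportChain hx).range_growMap h0]
    exact hj.isArcwiseConnected.union_image hδ hδi ⟨x, h0.symm⟩ hdisj

lemma IsForestModel.exists_vertex (hj : IsForestModel p γ J j) (hγ : IsArcDecomposition p γ)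
    {i : ι} (hi : i ∉ J) {t : ℝ} (ht : t ∈ Icc (0 : ℝ) 1) (h : γ i t ∈ range j) :
    (t = 0 ∨ t = 1) ∧ ∃ x, j x = γ i t ∧ ∀ e, x.1 e = 0 ∨ x.1 e = 1 := by
  rw [hj.range_eq] at h
  rcases h with h | h
  · exact ⟨hγ.base ht h, 0, hj.zero.trans h.symm, fun _ => Or.inl rfl⟩
  · obtain ⟨k, hk, s, hs, hst⟩ := mem_iUnion₂.1 h
    have hne : i ≠ k := fun h => hi (h ▸ hk)
    refine ⟨hγ.eq_or_eq ht hs hne hst.symm, ?_⟩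
    rw [← hst]
    exact hj.vertex k hk s (hγ.eq_or_eq hs ht hne.symm hst)

lemma IsForestModel.exists_insert [T2Space X] (hX : ∀ S : Set X, ¬ IsSimpleClosedCurve S)
    (hj : IsForestModel p γ J j) (hγ : IsArcDecomposition p γ) {i : ι} (hi : i ∉ J) {t : ℝ}
    (ht : t ∈ Icc (0 : ℝ) 1) (h : γ i t ∈ range j) :
    ∃ D : LowerSet E, ∃ k : forestTree (GrownForest D) → X, IsForestModel p γ (insert i J) k := by
  obtain ⟨ht01, x, hx, hx01⟩ := hj.exists_vertex hγ hi ht h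
  have hmem0 : (0 : ℝ) ∈ Icc (0 : ℝ) 1 := ⟨le_rfl, zero_le_one⟩
  have hmem1 : (1 : ℝ) ∈ Icc (0 : ℝ) 1 := ⟨zero_le_one, le_rfl⟩
  have hne : γ i 1 ≠ γ i 0 := fun h => one_ne_zero (hγ.injOn i hmem1 hmem0 h)
  have hcurve : ¬ (γ i 0 ∈ range j ∧ γ i 1 ∈ range j) := fun ⟨h0, h1⟩ => by
    obtain ⟨S, hS⟩ := (hj.isArcwiseConnected _ h1 _ h0 hne).exists_isSimpleClosedCurve
      (hγ.continuous i) ((hγ.injOn i).mono Ioo_subset_Icc_self) fun s hs h =>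
        (hj.exists_vertex hγ hi (Ioo_subset_Icc_self hs) h).1.elim hs.1.ne' hs.2.ne
    exact hX S hS
  rcases ht01 with rfl | rfl
  · refine ⟨_, _, hj.grow hx01 (hγ.continuous i) (hγ.injOn i) hx.symm (fun s hs hs' => ?_) rfl
      fun t ht => ⟨t, ht, rfl⟩⟩
    rcases (hj.exists_vertex hγ hi (Ioc_subset_Icc_self hs) hs').1 with rfl | rfl
    · exact hs.1.ne rfl
    · exact hcurve ⟨h, hs'⟩
  · have hrev : ∀ s ∈ Icc (0 : ℝ) 1, 1 - s ∈ Icc (0 : ℝ) 1 := fun s hs =>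
      ⟨sub_nonneg.2 hs.2, sub_le_self _ hs.1⟩
    refine ⟨_, _, hj.grow (δ := fun s => γ i (1 - s)) hx01
      ((hγ.continuous i).comp (continuous_const.sub continuous_id)) (fun s hs r hr h => ?_)
      (by simp [hx]) (fun s hs hs' => ?_) (Subset.antisymm ?_ ?_)
      fun t ht => ⟨1 - t, ?_, by simp⟩⟩
    · exact sub_right_injective (hγ.injOn i (hrev s hs) (hrev r hr) h)
    · rcases (hj.exists_vertex hγ hi (hrev s (Ioc_subset_Icc_self hs)) hs').1 with h0 | h1
      · rw [h0] at hs'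
        exact hcurve ⟨hs', h⟩
      · linarith [hs.1]
    · rintro _ ⟨s, hs, rfl⟩
      exact ⟨_, hrev s hs, rfl⟩
    · rintro _ ⟨s, hs, rfl⟩
      exact ⟨1 - s, hrev s hs, by simp⟩
    · rcases ht with rfl | rfl <;> norm_num

end ForestModel

lemma IsTree.exists_forestTree {X : Type*} [MetricSpace X] (hX : IsTree X) (p : X) :
    ∃ (E : Type) (_ : PartialOrder E) (_ : Finite E) (J : forestTree E ≃ₜ X),
      IsForestOrder E ∧ J 0 = p := by
  obtain ⟨ι, _, γ, hγ⟩ := hX.1.exists_isArcDecomposition p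
  obtain ⟨J, ⟨E, _, _, j, hj⟩, hmax⟩ := (toFinite {J : Set ι | ∃ (E : Type) (_ : PartialOrder E)
    (_ : Finite E) (j : forestTree E → X), IsForestModel p γ J j}).exists_maximal
    ⟨∅, Empty, inferInstance, inferInstance, _, isForestModel_empty⟩
  have hnot : ∀ i ∉ J, ∀ t ∈ Icc (0 : ℝ) 1, γ i t ∉ range j := fun i hi t ht h => by
    obtain ⟨D, k, hk⟩ := hj.exists_insert hX.2 hγ hi ht h
    exact hi (hmax ⟨_, inferInstance, inferInstance, k, hk⟩ (subset_insert i J) (mem_insert i J))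
  have : ConnectedSpace X := hX.1.2.1
  have hsurj : Function.Surjective j := by
    by_contra hsurj
    obtain ⟨y, hy⟩ := not_forall.1 hsurj
    have hcov : univ ⊆ range j ∪ ⋃ i ∈ Jᶜ, γ i '' Icc 0 1 := fun x _ => by
      obtain ⟨i, t, ht, rfl⟩ := hγ.exists_eq x
      by_cases hi : i ∈ J
      · rw [hj.range_eq]
        exact Or.inl (Or.inr (mem_iUnion₂.2 ⟨i, hi, t, ht, rfl⟩))
      · exact Or.inr (mem_iUnion₂.2 ⟨i, hi, t, ht, rfl⟩)
    obtain ⟨x, -, hx, hx'⟩ := isPreconnected_closed_iff.1 isPreconnected_univ (range j)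
      (⋃ i ∈ Jᶜ, γ i '' Icc 0 1) (isCompact_range hj.continuous).isClosed
      ((toFinite _).isClosed_biUnion fun i _ =>
        (isCompact_Icc.image (hγ.continuous i)).isClosed) hcov ⟨p, trivial, 0, hj.zero⟩
      ⟨y, trivial, (hcov (mem_univ y)).resolve_left hy⟩
    obtain ⟨i, hi, t, ht, rfl⟩ := mem_iUnion₂.1 hx'
    exact hnot i hi t ht hx
  exact ⟨E, _, ‹_›, Continuous.homeoOfEquivCompactToT2
    (f := Equiv.ofBijective j ⟨hj.injective, hsurj⟩) hj.continuous, hj.isForestOrder, hj.zero⟩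

section Reindex

variable {E F : Type*} [PartialOrder E] [PartialOrder F]

lemma comp_mem_forestTree (φ : E ≃o F) {f : F → ℝ} (hf : f ∈ forestTree F) :
    f ∘ φ ∈ forestTree E :=
  ⟨⟨fun e => hf.1.1 (φ e), fun a b hab => hf.1.2 (φ a) (φ b) (φ.lt_iff_lt.2 hab)⟩,
    fun a b ha hb => (hf.2 (φ a) (φ b) ha hb).imp φ.le_iff_le.1 φ.le_iff_le.1⟩

/-- Isomorphic forests have homeomorphic trees. -/
def forestTreeCongr (φ : E ≃o F) : forestTree F ≃ₜ forestTree E where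
  toFun f := ⟨f.1 ∘ φ, comp_mem_forestTree φ f.2⟩
  invFun f := ⟨f.1 ∘ φ.symm, comp_mem_forestTree φ.symm f.2⟩
  left_inv f := Subtype.ext (funext fun e => congrArg f.1 (φ.apply_symm_apply e))
  right_inv f := Subtype.ext (funext fun e => congrArg f.1 (φ.symm_apply_apply e))
  continuous_toFun := Continuous.subtype_mk (f := fun (f : forestTree F) => f.1 ∘ φ)
    (continuous_pi fun e => (continuous_apply (φ e)).comp continuous_subtype_val) _
  continuous_invFun := Continuous.subtype_mk (f := fun (f : forestTree E) => f.1 ∘ φ.symm)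
    (continuous_pi fun e => (continuous_apply (φ.symm e)).comp continuous_subtype_val) _

lemma forestTreeCongr_zero (φ : E ≃o F) : forestTreeCongr φ 0 = 0 := rfl

end Reindex

theorem statement16 {X Y : Type u} [MetricSpace X] [MetricSpace Y]
    (hX : IsTree X) (hY : IsTree Y)
    (p : X) (hp : p ∈ ramifIn (univ : Set X)) (q : Y)
    (h : CP X p ≃ₜ CP Y q) :
    ∃ 𝔥 : X ≃ₜ Y, 𝔥 p = q := by
  obtain ⟨E₀, _, _, J₀, hE₀, hJ₀⟩ := hX.exists_forestTree p
  obtain ⟨F₀, _, _, K₀, hF₀, hK₀⟩ := hY.exists_forestTree q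
  obtain ⟨E, _, _, J, hE, hEB, hJ⟩ := IsForestOrder.exists_branching _ E₀ rfl hE₀ J₀ hJ₀
  obtain ⟨F, _, _, K, hF, hFB, hK⟩ := IsForestOrder.exists_branching _ F₀ rfl hF₀ K₀ hK₀
  obtain ⟨a⟩ := nonempty_homeomorph_CP hE J hJ
  obtain ⟨b⟩ := nonempty_homeomorph_CP hF K hK
  obtain ⟨φ⟩ := exists_orderIso_of_homeomorph hF hFB hE hEB (b.trans (h.symm.trans a.symm))
  refine ⟨J.symm.trans ((forestTreeCongr φ).trans K), ?_⟩
  rw [Homeomorph.trans_apply, Homeomorph.trans_apply, J.symm_apply_eq.2 hJ.symm,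
    forestTreeCongr_zero, hK]
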